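/- For every integer m ≥ 2 and every Coxeter element c of G4, the set of length-m reflection factorizations of c decomposes into exactly ⌈m/3⌉ Hurwitz orbits. -/

import Mathlib

noncomputable section

open Matrix Complex

/-- The `i`-th Hurwitz move on length-`k` tuples of group elements. -/
def IsHurwitzMove {G : Type*} [Group G] {k : ℕ} (t t' : Fin k → G) : Prop :=
  ∃ i : ℕ, ∃ h : i + 1 < k,
    t' ⟨i, Nat.lt_of_succ_lt h⟩ = t ⟨i + 1, h⟩ ∧
    t' ⟨i + 1, h⟩ = (t ⟨i + 1, h⟩)⁻¹ * t ⟨i, Nat.lt_of_succ_lt h⟩ * t ⟨i + 1, h⟩ ∧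
    ∀ j : Fin k, (j : ℕ) ≠ i → (j : ℕ) ≠ i + 1 → t' j = t j

/-- Two tuples lie in the same Hurwitz orbit. -/
def SameHurwitzOrbit {G : Type*} [Group G] {k : ℕ} (t t' : Fin k → G) : Prop :=
  Relation.EqvGen IsHurwitzMove t t'

/-- A group element `r` appears (as an entry) in the Hurwitz orbit of the tuple `t`. -/
def Appears {G : Type*} [Group G] {k : ℕ} (r : G) (t : Fin k → G) : Prop :=
  ∃ s : Fin k → G, SameHurwitzOrbit t s ∧ ∃ j, s j = r

/-- A tuple has two consecutive equal entries. -/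
def HasConsecutiveEqualPair {G : Type*} [Group G] {k : ℕ} (t : Fin k → G) : Prop :=
  ∃ i : ℕ, ∃ h : i + 1 < k, t ⟨i, Nat.lt_of_succ_lt h⟩ = t ⟨i + 1, h⟩

/-- Replace the `p`-th entry of a tuple by two consecutive copies of its square. -/
def doubleAt {G : Type*} [Group G] {m : ℕ} (t : Fin m → G) (p : Fin m) : Fin (m + 1) → G :=
  fun j =>
    if h1 : (j : ℕ) < (p : ℕ) then t ⟨j, h1.trans p.isLt⟩
    else if h2 : (j : ℕ) ≤ (p : ℕ) + 1 then (t p) ^ 2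
    else t ⟨(j : ℕ) - 1, by have := j.isLt; omega⟩

/-- `ω = e^(2πi/3)`. -/
def ω : ℂ := Complex.exp (2 * Real.pi * Complex.I / 3)

def AMat : Matrix (Fin 2) (Fin 2) ℂ := !![1, 0; 0, ω]

def BMat : Matrix (Fin 2) (Fin 2) ℂ :=
  !![(ω - ω ^ 2) / 3, ω ^ 2; (-2 * ω ^ 2) / 3, (-ω - 2 * ω ^ 2) / 3]

/-- The complex reflection group G₄ as the subgroup of GL(2,ℂ) generated by `AMat`, `BMat`. -/
def G4 : Subgroup (GL (Fin 2) ℂ) :=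
  Subgroup.closure {g : GL (Fin 2) ℂ |
    (g : Matrix (Fin 2) (Fin 2) ℂ) = AMat ∨ (g : Matrix (Fin 2) (Fin 2) ℂ) = BMat}

/-- The matrix underlying an element of G₄. -/
def mat (t : G4) : Matrix (Fin 2) (Fin 2) ℂ := ((t : GL (Fin 2) ℂ) : Matrix (Fin 2) (Fin 2) ℂ)

/-- A reflection in G₄: a non-identity element with eigenvalue 1. -/
def IsReflection (t : G4) : Prop := t ≠ 1 ∧ (mat t - 1).det = 0

/-- The conjugacy class R₁ of reflections of determinant ω. -/
def R1 : Set G4 := {t | IsReflection t ∧ (mat t).det = ω}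

/-- The conjugacy class R₂ of reflections of determinant ω². -/
def R2 : Set G4 := {t | IsReflection t ∧ (mat t).det = ω ^ 2}

/-- A Coxeter element of G₄: an element with a primitive 6th root of unity as eigenvalue. -/
def IsCoxeter (c : G4) : Prop :=
  ∃ ζ : ℂ, IsPrimitiveRoot ζ 6 ∧ (mat c - ζ • (1 : Matrix (Fin 2) (Fin 2) ℂ)).det = 0

/-- The relators of G₅: a³, b³, abab(baba)⁻¹. -/
def g5Rels : Set (FreeGroup (Fin 2)) :=
  {FreeGroup.of 0 ^ 3, FreeGroup.of 1 ^ 3,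
    FreeGroup.of 0 * FreeGroup.of 1 * FreeGroup.of 0 * FreeGroup.of 1 *
      (FreeGroup.of 1 * FreeGroup.of 0 * FreeGroup.of 1 * FreeGroup.of 0)⁻¹}

/-- The complex reflection group G₅, by its presentation ⟨a,b | a³ = b³ = 1, abab = baba⟩. -/
abbrev G5 := PresentedGroup g5Rels

def ga : G5 := PresentedGroup.of 0
def gb : G5 := PresentedGroup.of 1

/-- The conjugacy class of `a` in G₅. -/
def S1 : Set G5 := {t | IsConj ga t}
/-- The conjugacy class of `b` in G₅. -/
def S2 : Set G5 := {t | IsConj gb t}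
/-- The conjugacy class of `a²` in G₅. -/
def S3 : Set G5 := {t | IsConj (ga ^ 2) t}
/-- The conjugacy class of `b²` in G₅. -/
def S4 : Set G5 := {t | IsConj (gb ^ 2) t}

/-- A reflection in G₅: a conjugate of a, b, a², or b². -/
def IsReflection5 (t : G5) : Prop := t ∈ S1 ∨ t ∈ S2 ∨ t ∈ S3 ∨ t ∈ S4

/-- A Coxeter element of G₅: an element of order 12. -/
def IsCoxeter5 (c : G5) : Prop := orderOf c = 12

/-!
The four reflections of determinant `ω` form a class `K` whose members conjugate one another like
the rotations about the vertices of a tetrahedron, and the reflections of `G₄` are `K ∪ K⁻¹`.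
Hurwitz moves preserve the number `k` of letters of a word lying in `K`, and they can bring these
letters in front of the others. A long word sorted in this way, with a Coxeter element as product,
can be made to begin with a cancelling pair `x, x⁻¹` or with a cube `x, x, x`. What remains still
generates the group, so the block may be replaced by any of its conjugates, and by induction on
the length an orbit is determined by `k`.

Elements are classified in the same way, by shortening words in `K`: the Coxeter elements are the
products `x * y` of distinct `x, y ∈ K` and their inverses, all other elements having order
`1`, `2`, `3` or `4`. For `c = x * y` the abelianization forces `k + 2 * (m - k) ≡ 2 (mod 3)`; every
such `k ≤ m` occurs, and there are `⌈m / 3⌉` of them. For `c = (x * y)⁻¹` exchange `K` and `K⁻¹`.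
-/

/-- A Hurwitz move on words in a group; tuples are handled as lists so that moves can be carried out
inside a longer word by concatenation. -/
inductive HurwitzStep {G : Type*} [Group G] : List G → List G → Prop
  | move (u : List G) (x y : G) (v : List G) :
      HurwitzStep (u ++ x :: y :: v) (u ++ y :: (y⁻¹ * x * y) :: v)

/-- Hurwitz equivalence of words: the equivalence relation generated by Hurwitz moves. -/
def HurwitzEquiv {G : Type*} [Group G] : List G → List G → Prop := Relation.EqvGen HurwitzStep

local infix:50 " ≈ₕ " => HurwitzEquiv

section HurwitzWords

variable {G : Type*} [Group G]

theorem inv_mul_mul_mem_iff {K : Set G} (hK : ∀ g, ∀ x ∈ K, g * x * g⁻¹ ∈ K) {x y : G} :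
    y⁻¹ * x * y ∈ K ↔ x ∈ K :=
  ⟨fun h => by simpa [mul_assoc] using hK y _ h, fun h => by simpa using hK y⁻¹ x h⟩

namespace HurwitzEquiv

variable {l l' l'' : List G}

theorem refl (l : List G) : l ≈ₕ l := Relation.EqvGen.refl l

theorem symm (h : l ≈ₕ l') : l' ≈ₕ l := Relation.EqvGen.symm _ _ h

theorem trans (h : l ≈ₕ l') (h' : l' ≈ₕ l'') : l ≈ₕ l'' := Relation.EqvGen.trans _ _ _ h h'

instance : Trans (HurwitzEquiv (G := G)) HurwitzEquiv HurwitzEquiv := ⟨trans⟩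

theorem of_step (u : List G) (x y : G) (v : List G) :
    u ++ x :: y :: v ≈ₕ u ++ y :: (y⁻¹ * x * y) :: v :=
  Relation.EqvGen.rel _ _ (HurwitzStep.move u x y v)

theorem lift {r : List G → List G → Prop} (hr : Equivalence r)
    (step : ∀ u x y v, r (u ++ x :: y :: v) (u ++ y :: (y⁻¹ * x * y) :: v)) (h : l ≈ₕ l') :
    r l l' :=
  haveI := hr.isEquiv
  Relation.EqvGen.eqvGen_le (r := HurwitzStep) (fun _ _ ⟨u, x, y, v⟩ => step u x y v) l l' h

theorem map_eq {α : Type*} {f : List G → α}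
    (step : ∀ u x y v, f (u ++ x :: y :: v) = f (u ++ y :: (y⁻¹ * x * y) :: v)) (h : l ≈ₕ l') :
    f l = f l' :=
  h.lift (eq_equivalence.comap f) step

theorem map_equiv {f : List G → List G}
    (step : ∀ u x y v, f (u ++ x :: y :: v) ≈ₕ f (u ++ y :: (y⁻¹ * x * y) :: v)) (h : l ≈ₕ l') :
    f l ≈ₕ f l' :=
  h.lift (r := Function.onFun HurwitzEquiv f) ((Relation.EqvGen.is_equivalence _).comap f) step

theorem length_eq (h : l ≈ₕ l') : l.length = l'.length := h.map_eq (by simp)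

theorem prod_eq (h : l ≈ₕ l') : l.prod = l'.prod := h.map_eq (by simp [mul_assoc])

theorem forall_mem_iff {K : Set G} (hK : ∀ g, ∀ x ∈ K, g * x * g⁻¹ ∈ K) (h : l ≈ₕ l') :
    (∀ x ∈ l, x ∈ K) ↔ ∀ x ∈ l', x ∈ K := by
  refine iff_of_eq (h.map_eq (f := fun l => ∀ x ∈ l, x ∈ K) fun u x y v => propext ?_)
  simp only [List.forall_mem_append, List.forall_mem_cons, inv_mul_mul_mem_iff hK, and_left_comm]

theorem append_left (u : List G) (h : l ≈ₕ l') : u ++ l ≈ₕ u ++ l' :=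
  h.map_equiv (f := (u ++ ·)) fun u' x y v => by
    simpa using of_step (u ++ u') x y v

theorem append_right (v : List G) (h : l ≈ₕ l') : l ++ v ≈ₕ l' ++ v :=
  h.map_equiv (f := (· ++ v)) fun u x y v' => by
    simpa using of_step u x y (v' ++ v)

theorem cons (x : G) (h : l ≈ₕ l') : x :: l ≈ₕ x :: l' := h.append_left [x]

theorem swap {x y z : G} (h : x * y = y * z) (v : List G) : x :: y :: v ≈ₕ y :: z :: v := by
  obtain rfl : y⁻¹ * x * y = z := by rw [mul_assoc, h, inv_mul_cancel_left]
  exact of_step [] x y v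

theorem cons_equiv_concat (x : G) (v : List G) :
    x :: v ≈ₕ v ++ [MulAut.conj v.prod⁻¹ x] := by
  induction v generalizing x with
  | nil => simpa using refl [x]
  | cons y v ih =>
    calc x :: y :: v ≈ₕ y :: MulAut.conj y⁻¹ x :: v := swap (by simp [mul_assoc]) v
      _ ≈ₕ y :: (v ++ [MulAut.conj v.prod⁻¹ (MulAut.conj y⁻¹ x)]) := (ih _).cons y
      _ = y :: v ++ [MulAut.conj (y :: v).prod⁻¹ x] := by simp [mul_assoc]

theorem append_swap (u v : List G) : u ++ v ≈ₕ v ++ u.map (MulAut.conj v.prod⁻¹) := by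
  induction u with
  | nil => simpa using refl v
  | cons x u ih =>
    calc x :: (u ++ v) ≈ₕ x :: v ++ u.map (MulAut.conj v.prod⁻¹) := ih.cons x
      _ ≈ₕ v ++ [MulAut.conj v.prod⁻¹ x] ++ u.map (MulAut.conj v.prod⁻¹) :=
        (cons_equiv_concat x v).append_right _
      _ = v ++ (x :: u).map (MulAut.conj v.prod⁻¹) := by simp

theorem append_comm_of_prod_eq_one (u : List G) {v : List G} (hv : v.prod = 1) :
    u ++ v ≈ₕ v ++ u := by
  simpa [hv] using append_swap u v

/-- A block with product `1` can be carried to any letter of the word, conjugated by that letter,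
and carried back. -/
theorem append_conj_of_mem_closure {u v : List G} (hu : u.prod = 1) {g : G}
    (hg : g ∈ Subgroup.closure {x | x ∈ v}) : u ++ v ≈ₕ u.map (MulAut.conj g) ++ v := by
  have prod_map (g : G) {u : List G} (hu : u.prod = 1) : (u.map (MulAut.conj g)).prod = 1 := by
    rw [← map_list_prod, hu, map_one]
  induction hg using Subgroup.closure_induction generalizing u with
  | mem y hy =>
    obtain ⟨s, t, rfl⟩ := List.append_of_mem hy
    refine HurwitzEquiv.symm ?_
    calc u.map (MulAut.conj y) ++ (s ++ y :: t)
        = u.map (MulAut.conj y) ++ s ++ y :: t := by simp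
      _ ≈ₕ s ++ u.map (MulAut.conj y) ++ y :: t :=
        (append_comm_of_prod_eq_one s (prod_map y hu)).symm.append_right _
      _ = s ++ (u.map (MulAut.conj y) ++ [y]) ++ t := by simp
      _ ≈ₕ s ++ ([y] ++ u) ++ t := by
        refine (HurwitzEquiv.append_left s ?_).append_right t
        simpa [Function.comp_def, mul_assoc] using append_swap (u.map (MulAut.conj y)) [y]
      _ = s ++ [y] ++ u ++ t := by simp
      _ ≈ₕ u ++ (s ++ [y]) ++ t := (append_comm_of_prod_eq_one _ hu).append_right t
      _ = u ++ (s ++ y :: t) := by simp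
  | one => simpa using refl _
  | mul g h _ _ ihg ihh =>
    refine (ihh hu).trans ((ihg (prod_map h hu)).trans ?_)
    simpa [Function.comp_def] using refl _
  | inv g _ ih => simpa [Function.comp_def, mul_assoc] using (ih (prod_map g⁻¹ hu)).symm

end HurwitzEquiv

end HurwitzWords

section Frames

variable {G : Type*} [Group G] {x y z w : G}

/-- Four elements of order dividing three that conjugate one another like the rotations
`(y z w)`, `(x w z)`, `(x y w)`, `(x z y)` of a tetrahedron about its vertices `x, y, z, w`: each
of the four orbits of ordered pairs of vertices is recorded as a pair of equations between
products, such as `x * y = y * z = z * x`. -/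
structure IsFrame (x y z w : G) : Prop where
  pow_three : x ^ 3 = 1
  xy : x * y = y * z
  yz : y * z = z * x
  yx : y * x = x * w
  xw : x * w = w * y
  zy : z * y = y * w
  yw : y * w = w * z
  xz : x * z = z * w
  zw : z * w = w * x

namespace IsFrame

theorem braid_conj_products (hy : y ^ 3 = 1) (braid : x * y * x = y * x * y) :
    (y⁻¹ * x * y) * y = y⁻¹ * x * y⁻¹ ∧ y * (x⁻¹ * y * x) = y⁻¹ * x * y⁻¹ ∧
      (x⁻¹ * y * x) * (y⁻¹ * x * y) = y⁻¹ * x * y⁻¹ := by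
  have sq_y : y * y = y⁻¹ := by rw [eq_inv_iff_mul_eq_one, ← pow_three', hy]
  have w_eq : x⁻¹ * y * x = y * x * y⁻¹ := by
    rw [mul_assoc, inv_mul_eq_iff_eq_mul, ← mul_assoc, ← mul_assoc, eq_mul_inv_iff_mul_eq, braid]
  refine ⟨by rw [mul_assoc, sq_y], by rw [w_eq, ← sq_y]; group, ?_⟩
  calc (x⁻¹ * y * x) * (y⁻¹ * x * y) = y * x * (y * y)⁻¹ * x * y := by rw [w_eq]; group
    _ = y * (x * y * x) * y := by rw [sq_y]; group
    _ = y * y * x * (y * y) := by rw [braid]; group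
    _ = y⁻¹ * x * y⁻¹ := by rw [sq_y]

theorem of_braid (hx : x ^ 3 = 1) (hy : y ^ 3 = 1) (braid : x * y * x = y * x * y) :
    IsFrame x y (y⁻¹ * x * y) (x⁻¹ * y * x) := by
  obtain ⟨zy, yw, wz⟩ := braid_conj_products hy braid
  obtain ⟨wx, xz, zw⟩ := braid_conj_products hx braid.symm
  exact
    { pow_three := hx
      xy := by group
      yz := by rw [mul_assoc y⁻¹, mul_assoc y⁻¹, braid]; group
      yx := by group
      xw := by rw [mul_assoc x⁻¹, mul_assoc x⁻¹, ← braid]; group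
      zy := zy.trans yw.symm
      yw := yw.trans wz.symm
      xz := xz.trans zw.symm
      zw := zw.trans wx.symm }

theorem pow_three_y (h : IsFrame x y z w) : y ^ 3 = 1 := by
  obtain rfl : w⁻¹ * x * w = y := by rw [mul_assoc, h.xw, inv_mul_cancel_left]
  simpa [h.pow_three] using conj_pow (i := 3) (a := w⁻¹) (b := x)

theorem rotate_w (h : IsFrame x y z w) : IsFrame y z x w :=
  ⟨h.pow_three_y, h.yz, (h.xy.trans h.yz).symm, h.zy, h.yw, h.xz, h.zw, h.yx, h.xw⟩

theorem swap (h : IsFrame x y z w) : IsFrame y x w z :=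
  ⟨h.pow_three_y, h.yx, h.xw, h.xy, h.yz, (h.xz.trans h.zw).symm, h.xz, h.yw,
    (h.zy.trans h.yw).symm⟩

theorem rotate_z (h : IsFrame x y z w) : IsFrame y w z x := h.rotate_w.swap.rotate_w

theorem xy_equiv_yz (h : IsFrame x y z w) : [x, y] ≈ₕ [y, z] := .swap h.xy []

theorem xy_equiv_zx (h : IsFrame x y z w) : [x, y] ≈ₕ [z, x] :=
  h.xy_equiv_yz.trans h.rotate_w.xy_equiv_yz

theorem yxy_equiv_yyz (h : IsFrame x y z w) : [y, x, y] ≈ₕ [y, y, z] := h.xy_equiv_yz.cons y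

theorem zxy_equiv_zzx (h : IsFrame x y z w) : [z, x, y] ≈ₕ [z, z, x] := h.xy_equiv_zx.cons z

theorem xxy_equiv_zzw (h : IsFrame x y z w) : [x, x, y] ≈ₕ [z, z, w] :=
  calc [x, x, y] ≈ₕ [x, z, x] := h.xy_equiv_zx.cons x
    _ ≈ₕ [z, w, x] := .swap h.xz [x]
    _ ≈ₕ [z, z, w] := .cons z (.symm (.swap h.zw []))

theorem wxy_equiv_xyw (h : IsFrame x y z w) : [w, x, y] ≈ₕ [x, y, w] :=
  calc [w, x, y] ≈ₕ [x, z, y] := .swap (h.zw.symm.trans h.xz.symm) [y]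
    _ ≈ₕ [x, y, w] := .cons x (.swap h.zy [])

theorem xxyy_equiv_yyww (h : IsFrame x y z w) : [x, x, y, y] ≈ₕ [y, y, w, w] :=
  calc [x, x, y, y] ≈ₕ [x, y, z, y] := .cons x (.swap h.xy [y])
    _ ≈ₕ [y, z, z, y] := .swap h.xy [z, y]
    _ ≈ₕ [y, z, y, w] := .cons y (.cons z (.swap h.zy []))
    _ ≈ₕ [y, y, w, w] := .cons y (.swap h.zy [w])

theorem xxyw_equiv_wwyy (h : IsFrame x y z w) : [x, x, y, w] ≈ₕ [w, w, y, y] :=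
  calc [x, x, y, w] ≈ₕ [x, z, x, w] := .cons x (h.xy_equiv_zx.append_right [w])
    _ ≈ₕ [x, z, y, x] := .cons x (.cons z (.symm (.swap h.yx [])))
    _ ≈ₕ [z, w, y, x] := .swap h.xz [y, x]
    _ ≈ₕ [z, w, w, y] := .cons z (.cons w h.swap.xy_equiv_zx)
    _ ≈ₕ [w, x, w, y] := .swap h.zw [w, y]
    _ ≈ₕ [w, w, y, y] := .cons w (.swap h.xw [y])

theorem x_inv_y_equiv (h : IsFrame x y z w) (v : List G) : x :: y⁻¹ :: v ≈ₕ y⁻¹ :: w :: v :=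
  .swap (by rw [mul_inv_eq_iff_eq_mul, mul_assoc, ← h.xw, ← h.yx, inv_mul_cancel_left]) v

theorem inv_y_w_equiv (h : IsFrame x y z w) (v : List G) : y⁻¹ :: w :: v ≈ₕ w :: z⁻¹ :: v :=
  .swap (by rw [eq_mul_inv_iff_mul_eq, mul_assoc, ← h.yw, inv_mul_cancel_left]) v

theorem x_inv_y_equiv_w_inv_z (h : IsFrame x y z w) : [x, y⁻¹] ≈ₕ [w, z⁻¹] :=
  (h.x_inv_y_equiv []).trans (h.inv_y_w_equiv [])

theorem xy_inv_w_equiv_xx_inv_z (h : IsFrame x y z w) : [x, y, w⁻¹] ≈ₕ [x, x, z⁻¹] :=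
  h.rotate_z.x_inv_y_equiv_w_inv_z.cons x

theorem xx_inv_y_equiv_ww_inv_x (h : IsFrame x y z w) : [x, x, y⁻¹] ≈ₕ [w, w, x⁻¹] :=
  calc [x, x, y⁻¹] ≈ₕ [x, w, z⁻¹] := h.x_inv_y_equiv_w_inv_z.cons x
    _ ≈ₕ [w, y, z⁻¹] := .swap h.xw [z⁻¹]
    _ ≈ₕ [w, w, x⁻¹] := h.rotate_w.x_inv_y_equiv_w_inv_z.cons w

end IsFrame

end Frames

section Tetrahedral

open scoped Pointwise

variable {α : Type*}

/-- The word has two distinct neighbouring letters. -/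
def HasDistinctPair (P : List α) : Prop := ∃ s x y t, P = s ++ x :: y :: t ∧ x ≠ y

theorem eq_replicate_or_hasDistinctPair (P : List α) (hP : P ≠ []) :
    (∃ x, P = List.replicate P.length x) ∨ HasDistinctPair P := by
  obtain rfl | ⟨n, a, rfl, -⟩ | ⟨n, a, b, t, rfl, hn, hab⟩ :=
    List.eq_replicate_or_eq_replicate_append_cons P
  · contradiction
  · exact .inl ⟨a, by simp⟩
  · refine .inr ⟨List.replicate (n - 1) a, a, b, t, ?_, hab⟩
    obtain ⟨n, rfl⟩ := Nat.exists_eq_add_of_lt hn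
    simp [List.replicate_succ']

theorem HasDistinctPair.two_le_length {P : List α} (h : HasDistinctPair P) : 2 ≤ P.length := by
  obtain ⟨s, x, y, t, rfl, -⟩ := h
  simp only [List.length_append, List.length_cons]
  lia

theorem hasDistinctPair_pair_iff {x y : α} : HasDistinctPair [x, y] ↔ x ≠ y := by
  refine ⟨?_, fun hxy => ⟨[], x, y, [], rfl, hxy⟩⟩
  rintro ⟨s, u, v, t, heq, huv⟩
  have hlen := congrArg List.length heq
  simp only [List.length_cons, List.length_nil, List.length_append] at hlen
  obtain rfl : s = [] := List.length_eq_zero_iff.1 (by lia)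
  simp_all

variable {G : Type*} [Group G] {K : Set G} {x y z w : G}

/-- A conjugation-invariant set any two distinct members of which belong to a frame exhausting it:
the model is the class of reflections of determinant `ω` in `G₄`, whose members correspond to the
vertices of a tetrahedron. -/
structure IsTetrahedral (K : Set G) : Prop where
  conj_mem : ∀ g, ∀ x ∈ K, g * x * g⁻¹ ∈ K
  pow_three : ∀ x ∈ K, x ^ 3 = 1
  exists_frame : ∀ x ∈ K, ∀ y ∈ K, x ≠ y → ∃ z w, IsFrame x y z w ∧ K = {x, y, z, w}

namespace IsFrame

theorem inv (h : IsFrame x y z w) : IsFrame x⁻¹ y⁻¹ w⁻¹ z⁻¹ where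
  pow_three := by rw [inv_pow, h.pow_three, inv_one]
  xy := by simpa using congrArg Inv.inv (h.yx.trans h.xw)
  yz := by simpa using congrArg Inv.inv h.xw.symm
  yx := by simpa using congrArg Inv.inv (h.xy.trans h.yz)
  xw := by simpa using congrArg Inv.inv h.yz.symm
  zy := by simpa using congrArg Inv.inv h.zy.symm
  yw := by simpa using congrArg Inv.inv (h.zy.trans h.yw)
  xz := by simpa using congrArg Inv.inv h.zw.symm
  zw := by simpa using congrArg Inv.inv h.xz.symm

theorem y_ne_z (h : IsFrame x y z w) (hxy : x ≠ y) : y ≠ z := by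
  rintro rfl
  exact hxy (mul_right_cancel h.xy)

theorem z_ne_x (h : IsFrame x y z w) (hxy : x ≠ y) : z ≠ x :=
  h.rotate_w.y_ne_z (h.y_ne_z hxy)

end IsFrame

namespace IsTetrahedral

theorem inv (hK : IsTetrahedral K) : IsTetrahedral K⁻¹ where
  conj_mem g x hx := by simpa [mul_assoc] using hK.conj_mem g x⁻¹ hx
  pow_three x hx := by simpa using hK.pow_three x⁻¹ hx
  exists_frame x hx y hy hxy := by
    obtain ⟨z, w, h, rfl⟩ := hK.exists_frame x⁻¹ hx y⁻¹ hy (inv_injective.ne hxy)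
    refine ⟨w⁻¹, z⁻¹, by simpa using h.inv, ?_⟩
    ext p
    simp [or_comm]

theorem exists_triple_last (hK : IsTetrahedral K) {p x y r : G} (hp : p ∈ K) (hx : x ∈ K)
    (hy : y ∈ K) (hr : r ∈ K) (hxy : x ≠ y) : ∃ u v, [p, x, y] ≈ₕ [u, v, r] := by
  obtain ⟨z, w, h, rfl⟩ := hK.exists_frame x hx y hy hxy
  rcases hr with rfl | rfl | rfl | rfl
  · exact ⟨p, z, h.xy_equiv_zx.cons p⟩
  · exact ⟨p, x, .refl _⟩
  · exact ⟨p, y, h.xy_equiv_yz.cons p⟩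
  rcases hp with rfl | rfl | rfl | rfl
  · exact ⟨z, z, h.xxy_equiv_zzw⟩
  · exact ⟨x, x, h.yxy_equiv_yyz.trans h.rotate_w.xxy_equiv_zzw⟩
  · exact ⟨y, y, h.zxy_equiv_zzx.trans h.rotate_w.rotate_w.xxy_equiv_zzw⟩
  · exact ⟨x, y, h.wxy_equiv_xyw⟩

theorem exists_equiv_concat_triple (hK : IsTetrahedral K) {P : List G} (hP : ∀ x ∈ P, x ∈ K)
    (hlen : 3 ≤ P.length) (hpair : HasDistinctPair P) :
    ∃ P' p x y, P ≈ₕ P' ++ [p, x, y] ∧ x ≠ y ∧ ∀ g ∈ P' ++ [p, x, y], g ∈ K := by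
  obtain ⟨s, x, y, t, rfl, hxy⟩ := hpair
  let conj := MulAut.conj t.prod⁻¹
  have move_pair : s ++ x :: y :: t ≈ₕ s ++ t ++ [conj x, conj y] := by
    simpa [conj] using (HurwitzEquiv.append_swap [x, y] t).append_left s
  obtain hst | ⟨u, p, hst⟩ := (s ++ t).eq_nil_or_concat'
  · simp_all
  · rw [hst, List.append_assoc] at move_pair
    exact ⟨u, p, conj x, conj y, move_pair, conj.injective.ne hxy,
      (move_pair.forall_mem_iff hK.conj_mem).1 hP⟩

theorem exists_equiv_concat (hK : IsTetrahedral K) {P : List G} (hP : ∀ x ∈ P, x ∈ K)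
    (hlen : 3 ≤ P.length) (hpair : HasDistinctPair P) {r : G} (hr : r ∈ K) :
    ∃ P', P ≈ₕ P' ++ [r] := by
  obtain ⟨P', p, x, y, hequiv, hxy, hmem⟩ := hK.exists_equiv_concat_triple hP hlen hpair
  obtain ⟨u, v, htriple⟩ := hK.exists_triple_last (hmem p (by simp)) (hmem x (by simp))
    (hmem y (by simp)) hr hxy
  exact ⟨P' ++ [u, v], by simpa using hequiv.trans (htriple.append_left P')⟩

theorem exists_equiv_cons (hK : IsTetrahedral K) {P : List G} (hP : ∀ x ∈ P, x ∈ K)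
    (hlen : 3 ≤ P.length) (hpair : HasDistinctPair P) {r : G} (hr : r ∈ K) :
    ∃ P', P ≈ₕ r :: P' := by
  obtain ⟨P', hequiv⟩ := hK.exists_equiv_concat hP hlen hpair hr
  exact ⟨_, hequiv.trans (.append_swap P' [r])⟩

theorem exists_equiv_double_cons (hK : IsTetrahedral K) {P : List G} (hP : ∀ x ∈ P, x ∈ K)
    (hlen : 4 ≤ P.length) (hpair : HasDistinctPair P) : ∃ x P', P ≈ₕ x :: x :: P' := by
  obtain ⟨P', p, x, y, hequiv, hxy, hmem⟩ := hK.exists_equiv_concat_triple hP (by lia) hpair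
  obtain rfl | ⟨u, q, rfl⟩ := P'.eq_nil_or_concat'
  · simpa using hlen.trans hequiv.length_eq.le
  obtain ⟨v, hv⟩ := hK.exists_equiv_cons (P := [p, x, y]) (fun g hg => hmem g (by simp_all))
    (by simp) ⟨[p], x, y, [], rfl, hxy⟩ (hmem q (by simp))
  refine ⟨q, u.map (MulAut.conj [q, q].prod⁻¹) ++ v, ?_⟩
  calc P ≈ₕ u ++ [q] ++ [p, x, y] := hequiv
    _ ≈ₕ u ++ [q] ++ q :: v := hv.append_left _
    _ = u ++ [q, q] ++ v := by simp
    _ ≈ₕ [q, q] ++ u.map (MulAut.conj [q, q].prod⁻¹) ++ v :=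
      (HurwitzEquiv.append_swap u [q, q]).append_right v

theorem exists_equiv_triple_cons (hK : IsTetrahedral K) {P : List G} (hP : ∀ x ∈ P, x ∈ K)
    (hlen : 5 ≤ P.length) (hpair : HasDistinctPair P) : ∃ x P', P ≈ₕ x :: x :: x :: P' := by
  obtain ⟨x, P₂, hequiv⟩ := hK.exists_equiv_double_cons hP (by lia) hpair
  have hmem := (hequiv.forall_mem_iff hK.conj_mem).1 hP
  have hlen₂ : 3 ≤ P₂.length := by simpa using hlen.trans hequiv.length_eq.le
  obtain ⟨u, hu⟩ | hpair₂ := eq_replicate_or_hasDistinctPair P₂ (List.ne_nil_of_length_pos (by lia))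
  · obtain ⟨n, hn⟩ := Nat.exists_eq_add_of_le' hlen₂
    obtain rfl : P₂ = [u, u, u] ++ List.replicate n u := by rw [hu, hn]; rfl
    exact ⟨u, _, hequiv.trans ((HurwitzEquiv.append_swap [x, x] [u, u, u]).append_right _)⟩
  · obtain ⟨P₁, h₁⟩ := hK.exists_equiv_cons (fun g hg => hmem g (by simp [hg])) hlen₂ hpair₂
      (hmem x (by simp))
    exact ⟨x, P₁, hequiv.trans ((h₁.cons x).cons x)⟩

theorem prod_mem_or_exists_equiv_squares (hK : IsTetrahedral K) {P : List G}
    (hP : ∀ x ∈ P, x ∈ K) (hlen : P.length = 4) (hpair : HasDistinctPair P) :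
    P.prod ∈ K ∨ ∃ x ∈ K, ∃ y ∈ K, x ≠ y ∧ P ≈ₕ [x, x, y, y] := by
  obtain ⟨x, P₂, hequiv⟩ := hK.exists_equiv_double_cons hP hlen.ge hpair
  obtain ⟨u, v, rfl⟩ : ∃ u v, P₂ = [u, v] := List.length_eq_two.1 (by
    simpa [hlen] using hequiv.length_eq.symm)
  have hmem := (hequiv.forall_mem_iff hK.conj_mem).1 hP
  simp only [List.forall_mem_cons] at hmem
  obtain ⟨hx, -, hu, hv, -⟩ := hmem
  have prod_mem {a b : G} (ha : a ∈ K) (hb : b ∈ K) (h : P ≈ₕ [a, a, a, b]) : P.prod ∈ K := by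
    have cube := hK.pow_three a ha
    rw [pow_three'] at cube
    simpa [h.prod_eq, ← mul_assoc, cube] using hb
  obtain rfl | huv := eq_or_ne u v
  · obtain rfl | hxu := eq_or_ne x u
    · exact .inl (prod_mem hx hx hequiv)
    · exact .inr ⟨x, hx, u, hu, hxu, hequiv⟩
  obtain ⟨s, t, h, rfl⟩ := hK.exists_frame u hu v hv huv
  rcases hx with rfl | rfl | rfl | rfl
  · exact .inl (prod_mem hu hv hequiv)
  · exact .inl (prod_mem hv (by simp) (hequiv.trans (h.yxy_equiv_yyz.cons x)))
  · exact .inl (prod_mem (by simp) hu (hequiv.trans (h.zxy_equiv_zzx.cons x)))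
  · exact .inr ⟨v, hv, u, hu, huv.symm, hequiv.trans h.rotate_z.rotate_z.xxyw_equiv_wwyy⟩

end IsTetrahedral

end Tetrahedral

section CoxeterLike

open scoped Pointwise

variable {G : Type*} [Group G] {K : Set G} {x y z w : G} {P M W : List G}

/-- The elements that lie neither in the commutator subgroup nor in a cyclic subgroup generated by
an element of `K`. In `G₄` these are the Coxeter elements. -/
structure IsCoxeterLike (K : Set G) (c : G) : Prop where
  notMem_commutator : c ∉ commutator G
  notMem_zpowers : ∀ x ∈ K, c ∉ Subgroup.zpowers x

theorem IsCoxeterLike.hasDistinctPair (hc : IsCoxeterLike K P.prod) (hP : ∀ x ∈ P, x ∈ K) :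
    HasDistinctPair P := by
  have hne : P ≠ [] := by
    rintro rfl
    exact hc.notMem_commutator (one_mem _)
  refine (eq_replicate_or_hasDistinctPair P hne).resolve_left ?_
  rintro ⟨x, hx⟩
  refine hc.notMem_zpowers x (hP x ?_) ?_
  · rw [hx]; simpa using hne
  · rw [hx, List.prod_replicate]
    exact Subgroup.npow_mem_zpowers x _

theorem IsFrame.pair_cases (h : IsFrame x y z w) (hxy : x ≠ y) {u v : G}
    (hu : u ∈ ({x, y, z, w} : Set G)) (hv : v ∈ ({x, y, z, w} : Set G)) (huv : u ≠ v)
    (heq : u * v = x * y) :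
    u = x ∧ v = y ∨ u = y ∧ v = z ∨ u = z ∧ v = x := by
  rcases hu with rfl | rfl | rfl | rfl
  · exact .inl ⟨rfl, mul_left_cancel heq⟩
  · exact .inr (.inl ⟨rfl, mul_left_cancel (heq.trans h.xy)⟩)
  · exact .inr (.inr ⟨rfl, mul_left_cancel (heq.trans (h.xy.trans h.yz))⟩)
  exfalso
  rcases hv with rfl | rfl | rfl | rfl
  · exact h.y_ne_z hxy (mul_left_cancel ((heq.symm.trans h.zw.symm).trans h.xz.symm))
  · exact h.swap.z_ne_x hxy.symm (mul_left_cancel (h.xw.trans heq))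
  · exact h.z_ne_x hxy (mul_right_cancel ((h.zy.trans h.yw).trans heq))
  · exact huv rfl

namespace IsTetrahedral

theorem inv_eq_sq (hK : IsTetrahedral K) (hx : x ∈ K) : x⁻¹ = x ^ 2 :=
  inv_eq_of_mul_eq_one_right (by rw [← pow_succ', hK.pow_three x hx])

theorem abelianization_of_eq (hK : IsTetrahedral K) (hx : x ∈ K) (hy : y ∈ K) :
    Abelianization.of x = Abelianization.of y := by
  obtain rfl | hxy := eq_or_ne x y
  · rfl
  obtain ⟨z, w, h, -⟩ := hK.exists_frame x hx y hy hxy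
  have hxw := congrArg Abelianization.of h.xw
  rw [map_mul, map_mul, mul_comm] at hxw
  exact mul_left_cancel hxw

theorem abelianization_of_prod (hK : IsTetrahedral K) (hP : ∀ x ∈ P, x ∈ K)
    (hM : ∀ x ∈ M, x ∈ K⁻¹) (hx : x ∈ K) :
    Abelianization.of (P ++ M).prod = Abelianization.of x ^ (P.length + 2 * M.length) := by
  have of_eq_sq (g : G) (hg : g ∈ K⁻¹) : Abelianization.of g = Abelianization.of x ^ 2 := by
    rw [hK.abelianization_of_eq hx hg, ← map_pow, ← hK.inv_eq_sq hg, inv_inv]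
  rw [List.prod_append, map_mul, map_list_prod, map_list_prod, pow_add, pow_mul]
  congr 1
  · rw [List.prod_eq_pow_card _ (Abelianization.of x), List.length_map]
    simpa using fun g hg => hK.abelianization_of_eq (hP g hg) hx
  · rw [List.prod_eq_pow_card _ (Abelianization.of x ^ 2), List.length_map]
    simpa using fun g hg => of_eq_sq g (hM g hg)

theorem orderOf_abelianization_of (hK : IsTetrahedral K) (hP : ∀ x ∈ P, x ∈ K)
    (hM : ∀ x ∈ M, x ∈ K⁻¹) (hc : IsCoxeterLike K (P ++ M).prod) (hx : x ∈ K) :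
    orderOf (Abelianization.of x) = 3 := by
  refine orderOf_eq_prime (by rw [← map_pow, hK.pow_three x hx, map_one]) fun hone => ?_
  have of_prod := hK.abelianization_of_prod hP hM hx
  rw [hone, one_pow] at of_prod
  exact hc.notMem_commutator (by rwa [← Abelianization.ker_of, MonoidHom.mem_ker])

theorem not_three_dvd_length (hK : IsTetrahedral K) (hP : ∀ x ∈ P, x ∈ K)
    (hM : ∀ x ∈ M, x ∈ K⁻¹) (hc : IsCoxeterLike K (P ++ M).prod) :
    ¬ 3 ∣ P.length + 2 * M.length := by
  obtain rfl | ⟨x, hx⟩ := K.eq_empty_or_nonempty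
  · simp only [Set.mem_empty_iff_false, Set.inv_empty] at hP hM
    rw [List.eq_nil_iff_forall_not_mem.2 hP, List.eq_nil_iff_forall_not_mem.2 hM] at hc
    exact (hc.notMem_commutator (one_mem _)).elim
  intro hdvd
  rw [← hK.orderOf_abelianization_of hP hM hc hx, orderOf_dvd_iff_pow_eq_one,
    ← hK.abelianization_of_prod hP hM hx] at hdvd
  exact hc.notMem_commutator (by rwa [← Abelianization.ker_of, MonoidHom.mem_ker])

theorem disjoint_inv (hK : IsTetrahedral K) (hP : ∀ x ∈ P, x ∈ K) (hM : ∀ x ∈ M, x ∈ K⁻¹)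
    (hc : IsCoxeterLike K (P ++ M).prod) : Disjoint K K⁻¹ := by
  refine Set.disjoint_left.2 fun x hx hx' => ?_
  have of_inv := hK.abelianization_of_eq hx' hx
  rw [hK.inv_eq_sq hx, map_pow, sq, mul_eq_left] at of_inv
  simpa [of_inv] using hK.orderOf_abelianization_of hP hM hc hx

theorem subset_of_mem_of_mem (hK : IsTetrahedral K) {H : Subgroup G} (hx : x ∈ K) (hy : y ∈ K)
    (hxy : x ≠ y) (hxH : x ∈ H) (hyH : y ∈ H) : K ⊆ H := by
  obtain ⟨z, w, h, rfl⟩ := hK.exists_frame x hx y hy hxy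
  have hz : z ∈ H := inv_mul_eq_of_eq_mul h.xy ▸ mul_mem (inv_mem hyH) (mul_mem hxH hyH)
  have hw : w ∈ H := inv_mul_eq_of_eq_mul h.yx ▸ mul_mem (inv_mem hxH) (mul_mem hyH hxH)
  simp [Set.insert_subset_iff, hxH, hyH, hz, hw]

theorem subset_closure_word (hK : IsTetrahedral K) (hW : ∀ x ∈ W, x ∈ K ∪ K⁻¹)
    (hc : IsCoxeterLike K W.prod) : K ⊆ Subgroup.closure {x | x ∈ W} := by
  set H := Subgroup.closure {x | x ∈ W}
  intro k hk
  by_contra hkH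
  have unique (p q : G) (hp : p ∈ K ∧ p ∈ H) (hq : q ∈ K ∧ q ∈ H) : p = q := by
    by_contra hpq
    exact hkH (hK.subset_of_mem_of_mem hp.1 hq.1 hpq hp.2 hq.2 hk)
  obtain ⟨x, hx, eq_x⟩ : ∃ x ∈ K, ∀ p, p ∈ K ∧ p ∈ H → p = x := by
    by_cases hex : ∃ x, x ∈ K ∧ x ∈ H
    · obtain ⟨x, hx⟩ := hex
      exact ⟨x, hx.1, fun p hp => unique p x hp hx⟩
    · exact ⟨k, hk, fun p hp => (hex ⟨p, hp⟩).elim⟩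
  refine hc.notMem_zpowers x hx (list_prod_mem fun g hg => ?_)
  have hgH : g ∈ H := Subgroup.subset_closure hg
  rcases hW g hg with hgK | hgK
  · exact eq_x g ⟨hgK, hgH⟩ ▸ Subgroup.mem_zpowers g
  · rw [← Subgroup.inv_mem_iff]
    exact eq_x g⁻¹ ⟨hgK, inv_mem hgH⟩ ▸ Subgroup.mem_zpowers g⁻¹

theorem exists_conj_eq (hK : IsTetrahedral K) {H : Subgroup G} (hH : K ⊆ H) (hx : x ∈ K)
    (hy : y ∈ K) : ∃ g ∈ H, MulAut.conj g x = y := by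
  obtain rfl | hxy := eq_or_ne x y
  · exact ⟨1, one_mem H, by simp⟩
  obtain ⟨z, w, h, rfl⟩ := hK.exists_frame x hx y hy hxy
  refine ⟨w⁻¹, inv_mem (hH (by simp)), ?_⟩
  rw [MulAut.conj_apply, inv_inv, mul_assoc, h.xw, inv_mul_cancel_left]

theorem cancelling_pair_append_equiv (hK : IsTetrahedral K) (hx : x ∈ K) (hy : y ∈ K)
    (hW : ∀ x ∈ W, x ∈ K ∪ K⁻¹) (hc : IsCoxeterLike K W.prod) :
    x :: x⁻¹ :: W ≈ₕ y :: y⁻¹ :: W := by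
  obtain ⟨g, hg, rfl⟩ := hK.exists_conj_eq (hK.subset_closure_word hW hc) hx hy
  simpa [mul_assoc] using HurwitzEquiv.append_conj_of_mem_closure (u := [x, x⁻¹]) (by simp) hg

theorem cube_append_equiv (hK : IsTetrahedral K) (hx : x ∈ K) (hy : y ∈ K)
    (hW : ∀ x ∈ W, x ∈ K ∪ K⁻¹) (hc : IsCoxeterLike K W.prod) :
    x :: x :: x :: W ≈ₕ y :: y :: y :: W := by
  obtain ⟨g, hg, rfl⟩ := hK.exists_conj_eq (hK.subset_closure_word hW hc) hx hy
  refine HurwitzEquiv.append_conj_of_mem_closure (u := [x, x, x]) ?_ hg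
  simp [← _root_.pow_three, hK.pow_three x hx]

theorem pair_equiv_of_prod_eq (hK : IsTetrahedral K) {u v : G} (hx : x ∈ K) (hy : y ∈ K)
    (hu : u ∈ K) (hv : v ∈ K) (hxy : x ≠ y) (huv : u ≠ v) (heq : u * v = x * y) :
    [x, y] ≈ₕ [u, v] := by
  obtain ⟨z, w, h, rfl⟩ := hK.exists_frame x hx y hy hxy
  obtain ⟨rfl, rfl⟩ | ⟨rfl, rfl⟩ | ⟨rfl, rfl⟩ := h.pair_cases hxy hu hv huv heq
  · exact .refl _
  · exact h.xy_equiv_yz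
  · exact h.xy_equiv_zx

theorem squares_equiv_of_prod_eq (hK : IsTetrahedral K) {u v : G} (hx : x ∈ K) (hy : y ∈ K)
    (hu : u ∈ K) (hv : v ∈ K) (hxy : x ≠ y) (huv : u ≠ v) (heq : v * u = y * x) :
    [x, x, y, y] ≈ₕ [u, u, v, v] := by
  obtain ⟨w, z, h, rfl⟩ := hK.exists_frame y hy x hx hxy.symm
  obtain ⟨rfl, rfl⟩ | ⟨rfl, rfl⟩ | ⟨rfl, rfl⟩ := h.pair_cases hxy.symm hv hu huv.symm heq
  · exact .refl _
  · exact h.swap.xxyy_equiv_yyww.trans h.swap.rotate_z.xxyy_equiv_yyww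
  · exact h.swap.xxyy_equiv_yyww

theorem square_inv_equiv_of_prod_eq (hK : IsTetrahedral K) {u v : G} (hx : x ∈ K) (hy : y ∈ K)
    (hu : u ∈ K) (hv : v ∈ K) (hxy : x ≠ y) (huv : u ≠ v) (heq : v * u = y * x) :
    [x, x, y⁻¹] ≈ₕ [u, u, v⁻¹] := by
  obtain ⟨w, z, h, rfl⟩ := hK.exists_frame y hy x hx hxy.symm
  obtain ⟨rfl, rfl⟩ | ⟨rfl, rfl⟩ | ⟨rfl, rfl⟩ := h.pair_cases hxy.symm hv hu huv.symm heq
  · exact .refl _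
  · exact h.swap.xx_inv_y_equiv_ww_inv_x
  · exact h.swap.xx_inv_y_equiv_ww_inv_x.trans
      h.swap.rotate_z.rotate_z.xx_inv_y_equiv_ww_inv_x

end IsTetrahedral

end CoxeterLike

section Uniqueness

open scoped Pointwise

variable {G : Type*} [Group G] {K : Set G} {c : G} {P Q : List G}

theorem IsCoxeterLike.inv_left (hc : IsCoxeterLike K c) : IsCoxeterLike K⁻¹ c where
  notMem_commutator := hc.notMem_commutator
  notMem_zpowers x hx := by simpa using hc.notMem_zpowers x⁻¹ hx

theorem IsCoxeterLike.inv_right (hc : IsCoxeterLike K c) : IsCoxeterLike K c⁻¹ where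
  notMem_commutator := by simpa using hc.notMem_commutator
  notMem_zpowers x hx := by simpa using hc.notMem_zpowers x hx

namespace IsTetrahedral

theorem prod_cube_cons (hK : IsTetrahedral K) {x : G} (hx : x ∈ K) :
    (x :: x :: x :: P).prod = P.prod := by
  rw [List.prod_cons, List.prod_cons, List.prod_cons, ← mul_assoc, ← mul_assoc, ← pow_three',
    hK.pow_three x hx, one_mul]

theorem equiv_of_length_eq_two (hK : IsTetrahedral K) (hP : ∀ x ∈ P, x ∈ K)
    (hQ : ∀ x ∈ Q, x ∈ K) (hPlen : P.length = 2) (hQlen : Q.length = 2)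
    (hprod : P.prod = Q.prod) (hc : IsCoxeterLike K P.prod) : P ≈ₕ Q := by
  have hP₂ := hc.hasDistinctPair hP
  have hQ₂ := (hprod ▸ hc).hasDistinctPair hQ
  obtain ⟨x, y, rfl⟩ := List.length_eq_two.1 hPlen
  obtain ⟨u, v, rfl⟩ := List.length_eq_two.1 hQlen
  exact hK.pair_equiv_of_prod_eq (hP x (by simp)) (hP y (by simp)) (hQ u (by simp))
    (hQ v (by simp)) (hasDistinctPair_pair_iff.1 hP₂) (hasDistinctPair_pair_iff.1 hQ₂)
    (by simpa using hprod.symm)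

theorem exists_equiv_squares (hK : IsTetrahedral K) (hP : ∀ x ∈ P, x ∈ K) (hlen : P.length = 4)
    (hc : IsCoxeterLike K P.prod) : ∃ x ∈ K, ∃ y ∈ K, x ≠ y ∧ P ≈ₕ [x, x, y, y] :=
  (hK.prod_mem_or_exists_equiv_squares hP hlen (hc.hasDistinctPair hP)).resolve_left
    fun hmem => hc.notMem_zpowers _ hmem (Subgroup.mem_zpowers _)

theorem prod_squares (hK : IsTetrahedral K) {x y : G} (hx : x ∈ K) (hy : y ∈ K) :
    [x, x, y, y].prod = (y * x)⁻¹ := by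
  simp [hK.inv_eq_sq hx, hK.inv_eq_sq hy, sq, mul_assoc]

theorem equiv_of_length_eq_four (hK : IsTetrahedral K) (hP : ∀ x ∈ P, x ∈ K)
    (hQ : ∀ x ∈ Q, x ∈ K) (hPlen : P.length = 4) (hQlen : Q.length = 4)
    (hprod : P.prod = Q.prod) (hc : IsCoxeterLike K P.prod) : P ≈ₕ Q := by
  obtain ⟨x, hx, y, hy, hxy, hPxy⟩ := hK.exists_equiv_squares hP hPlen hc
  obtain ⟨u, hu, v, hv, huv, hQuv⟩ := hK.exists_equiv_squares hQ hQlen (hprod ▸ hc)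
  have heq : v * u = y * x := by
    rw [← _root_.inv_inj, ← hK.prod_squares hx hy, ← hK.prod_squares hu hv, ← hPxy.prod_eq,
      ← hQuv.prod_eq, hprod]
  exact hPxy.trans ((hK.squares_equiv_of_prod_eq hx hy hu hv hxy huv heq).trans hQuv.symm)

theorem equiv_of_prod_eq_of_length_eq {P Q : List G} (hK : IsTetrahedral K)
    (hP : ∀ x ∈ P, x ∈ K) (hQ : ∀ x ∈ Q, x ∈ K) (hlen : P.length = Q.length)
    (hprod : P.prod = Q.prod) (hc : IsCoxeterLike K P.prod) : P ≈ₕ Q := by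
  have hP₂ := hc.hasDistinctPair hP
  have hQ₂ := (hprod ▸ hc).hasDistinctPair hQ
  have h₂ := hP₂.two_le_length
  have h₃ : ¬ 3 ∣ P.length := by
    simpa using hK.not_three_dvd_length hP (M := []) (by simp) (by simpa using hc)
  obtain h | h | h : P.length = 2 ∨ P.length = 4 ∨ 5 ≤ P.length := by lia
  · exact hK.equiv_of_length_eq_two hP hQ h (hlen ▸ h) hprod hc
  · exact hK.equiv_of_length_eq_four hP hQ h (hlen ▸ h) hprod hc
  obtain ⟨x, P', hPx⟩ := hK.exists_equiv_triple_cons hP h hP₂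
  obtain ⟨y, Q', hQy⟩ := hK.exists_equiv_triple_cons hQ (hlen ▸ h) hQ₂
  have hPlen := hPx.length_eq
  have hQlen := hQy.length_eq
  have hPprod := hPx.prod_eq
  have hQprod := hQy.prod_eq
  simp only [hPx.forall_mem_iff hK.conj_mem, hQy.forall_mem_iff hK.conj_mem,
    List.forall_mem_cons] at hP hQ
  rw [hK.prod_cube_cons hP.1] at hPprod
  rw [hK.prod_cube_cons hQ.1] at hQprod
  rw [hPprod] at hc
  have tail_equiv : P' ≈ₕ Q' :=
    hK.equiv_of_prod_eq_of_length_eq hP.2.2.2 hQ.2.2.2 (by simp_all)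
      (by rw [← hPprod, ← hQprod, hprod]) hc
  calc P ≈ₕ x :: x :: x :: P' := hPx
    _ ≈ₕ y :: y :: y :: P' :=
      hK.cube_append_equiv hP.1 hQ.1 (fun g hg => .inl (hP.2.2.2 g hg)) hc
    _ ≈ₕ y :: y :: y :: Q' := tail_equiv.append_left [y, y, y]
    _ ≈ₕ Q := hQy.symm
termination_by P.length
decreasing_by simp only [hPlen, List.length_cons]; lia

end IsTetrahedral

end Uniqueness

section SortedWords

open scoped Pointwise

variable {G : Type*} [Group G] {K : Set G} {P M W W' : List G} {k l : ℕ}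

/-- The words made of `k` letters of `K` followed by `l` letters of `K⁻¹`. -/
def sortedWords (K : Set G) (k l : ℕ) : Set (List G) :=
  {W | ∃ P M, W = P ++ M ∧ (∀ x ∈ P, x ∈ K) ∧ (∀ x ∈ M, x ∈ K⁻¹) ∧ P.length = k ∧ M.length = l}

theorem append_mem_sortedWords (hP : ∀ x ∈ P, x ∈ K) (hM : ∀ x ∈ M, x ∈ K⁻¹) :
    P ++ M ∈ sortedWords K P.length M.length :=
  ⟨P, M, rfl, hP, hM, rfl, rfl⟩

theorem mem_union_inv_of_mem_sortedWords (hW : W ∈ sortedWords K k l) :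
    ∀ x ∈ W, x ∈ K ∪ K⁻¹ := by
  obtain ⟨P, M, rfl, hP, hM, -, -⟩ := hW
  exact List.forall_mem_append.2 ⟨fun x hx => .inl (hP x hx), fun x hx => .inr (hM x hx)⟩

theorem IsCoxeterLike.exists_mem_inv_ne {x : G} (hc : IsCoxeterLike K (P ++ M).prod)
    (hx : x ∈ K) (hP : ∀ p ∈ P, p = x) : ∃ m ∈ M, m⁻¹ ≠ x := by
  by_contra! hM
  refine hc.notMem_zpowers x hx (list_prod_mem (List.forall_mem_append.2 ⟨?_, ?_⟩))
  · exact fun p hp => hP p hp ▸ Subgroup.mem_zpowers p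
  · exact fun m hm => Subgroup.inv_mem_iff _ |>.1 (hM m hm ▸ Subgroup.mem_zpowers m⁻¹)

namespace IsTetrahedral

theorem exists_equiv_mem_sortedWords_inv (hK : IsTetrahedral K) (hW : W ∈ sortedWords K k l) :
    ∃ W' ∈ sortedWords K⁻¹ l k, W ≈ₕ W' := by
  obtain ⟨P, M, rfl, hP, hM, rfl, rfl⟩ := hW
  refine ⟨_, ⟨M, _, rfl, hM, ?_, rfl, List.length_map _⟩, .append_swap P M⟩
  simpa using fun x hx => hK.conj_mem M.prod⁻¹ x (hP x hx)

theorem exists_equiv_replicate_concat (hK : IsTetrahedral K) {x m : G} {s t : List G} (n : ℕ)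
    (hx : x ∈ K) (hM : ∀ g ∈ s ++ m :: t, g ∈ K⁻¹) (hm : m⁻¹ ≠ x) :
    ∃ w ∈ K, x ≠ w ∧ ∃ M', (∀ g ∈ M', g ∈ K⁻¹) ∧
      List.replicate (n + 1) x ++ (s ++ m :: t) ≈ₕ List.replicate n x ++ [w] ++ M' := by
  have move_m : s ++ m :: t ≈ₕ m :: (s.map (MulAut.conj m⁻¹) ++ t) := by
    simpa using (HurwitzEquiv.append_swap s [m]).append_right t
  rw [move_m.forall_mem_iff hK.inv.conj_mem, List.forall_mem_cons] at hM
  obtain ⟨z, w, h, hKeq⟩ := hK.exists_frame x hx m⁻¹ hM.1 hm.symm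
  have hz : z ∈ K := hKeq ▸ by simp
  refine ⟨w, hKeq ▸ by simp, h.swap.y_ne_z hm, z⁻¹ :: (s.map (MulAut.conj m⁻¹) ++ t),
    List.forall_mem_cons.2 ⟨by simpa using hz, hM.2⟩, (move_m.append_left _).trans ?_⟩
  simpa [List.replicate_succ'] using
    (h.x_inv_y_equiv_w_inv_z.append_right (s.map (MulAut.conj m⁻¹) ++ t)).append_left
      (List.replicate n x)

theorem exists_equiv_hasDistinctPair_append (hK : IsTetrahedral K) (hP : ∀ x ∈ P, x ∈ K)
    (hM : ∀ x ∈ M, x ∈ K⁻¹) (hlen : 2 ≤ P.length) (hc : IsCoxeterLike K (P ++ M).prod) :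
    ∃ P' M', P ++ M ≈ₕ P' ++ M' ∧ HasDistinctPair P' ∧ (∀ x ∈ P', x ∈ K) ∧ (∀ x ∈ M', x ∈ K⁻¹) ∧
      P'.length = P.length := by
  obtain ⟨x, hPx⟩ | hpair :=
    eq_replicate_or_hasDistinctPair P (List.ne_nil_of_length_pos (by lia))
  swap
  · exact ⟨P, M, .refl _, hpair, hP, hM, rfl⟩
  obtain ⟨n, hn⟩ := Nat.exists_eq_add_of_le' hlen
  rw [hn] at hPx ⊢
  have hx : x ∈ K := hP x (by simp [hPx])
  obtain ⟨m, hm, hmx⟩ := hc.exists_mem_inv_ne hx (by simp [hPx])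
  obtain ⟨s, t, rfl⟩ := List.append_of_mem hm
  obtain ⟨w, hw, hxw, M', hM', hequiv⟩ := hK.exists_equiv_replicate_concat (n + 1) hx hM hmx
  refine ⟨_, M', hPx ▸ hequiv, ⟨List.replicate n x, x, w, [], ?_, hxw⟩, ?_, hM', by simp⟩
  · simp [List.replicate_succ']
  · simp [hx, hw, or_imp, forall_and]

theorem exists_equiv_cancelling_pair (hK : IsTetrahedral K) (hW : W ∈ sortedWords K (k + 1) (l + 1))
    (hlk : l ≤ k) (hkl : 2 ≤ k + l) (hc : IsCoxeterLike K W.prod) :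
    ∃ a ∈ K, ∃ W' ∈ sortedWords K k l, W ≈ₕ a :: a⁻¹ :: W' := by
  obtain ⟨P, M, rfl, hP, hM, hPlen, hMlen⟩ := hW
  have h₃ := hK.not_three_dvd_length hP hM hc
  obtain ⟨P', M', hequiv, hpair, hP', hM', hlen⟩ :=
    hK.exists_equiv_hasDistinctPair_append hP hM (by lia) hc
  have hlen' := hequiv.length_eq
  simp only [List.length_append] at hlen'
  obtain ⟨m, M₁, rfl⟩ := List.exists_cons_of_length_pos (l := M') (by lia)
  rw [List.forall_mem_cons] at hM'
  obtain ⟨P₁, hP₁⟩ := hK.exists_equiv_concat hP' (by lia) hpair hM'.1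
  rw [hP₁.forall_mem_iff hK.conj_mem, List.forall_mem_append] at hP'
  have hP₁len := hP₁.length_eq
  simp only [List.length_append, List.length_cons, List.length_nil] at hP₁len hlen'
  refine ⟨m⁻¹, hM'.1, P₁ ++ M₁, ⟨P₁, M₁, rfl, hP'.1, hM'.2, by lia, by lia⟩, ?_⟩
  calc P ++ M ≈ₕ P' ++ m :: M₁ := hequiv
    _ ≈ₕ P₁ ++ [m⁻¹] ++ m :: M₁ := hP₁.append_right _
    _ = P₁ ++ [m⁻¹, m⁻¹⁻¹] ++ M₁ := by simp
    _ ≈ₕ [m⁻¹, m⁻¹⁻¹] ++ P₁ ++ M₁ :=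
      (HurwitzEquiv.append_comm_of_prod_eq_one P₁ (by simp)).append_right M₁
    _ = m⁻¹ :: m⁻¹⁻¹ :: (P₁ ++ M₁) := by simp

theorem exists_equiv_square_inv (hK : IsTetrahedral K) (hW : W ∈ sortedWords K 2 1)
    (hc : IsCoxeterLike K W.prod) : ∃ x ∈ K, ∃ y ∈ K, x ≠ y ∧ W ≈ₕ [x, x, y⁻¹] := by
  obtain ⟨P, M, rfl, hP, hM, hPlen, hMlen⟩ := hW
  obtain ⟨p, q, rfl⟩ := List.length_eq_two.1 hPlen
  obtain ⟨m, rfl⟩ := List.length_eq_one_iff.1 hMlen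
  obtain ⟨n, rfl⟩ : ∃ n, m = n⁻¹ := ⟨m⁻¹, (inv_inv m).symm⟩
  have hp := hP p (by simp)
  have hq := hP q (by simp)
  have hn : n ∈ K := by simpa using hM n⁻¹ (by simp)
  have prod_ne (a : G) (ha : a ∈ K) : p * q ≠ a * n := fun h =>
    hc.notMem_zpowers a ha (by simp [← mul_assoc, h])
  obtain rfl | hpq := eq_or_ne p q
  · exact ⟨p, hp, n, hn, fun h => prod_ne p hp (by rw [h]), .refl _⟩
  obtain ⟨z, w, h, rfl⟩ := hK.exists_frame p hp q hq hpq
  rcases hn with rfl | rfl | rfl | rfl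
  · exact (prod_ne z (by simp) (h.xy.trans h.yz)).elim
  · exact (prod_ne p hp rfl).elim
  · exact (prod_ne q hq h.xy).elim
  · exact ⟨p, hp, z, by simp, (h.z_ne_x hpq).symm, h.xy_inv_w_equiv_xx_inv_z⟩

theorem equiv_of_mem_sortedWords_two_one (hK : IsTetrahedral K) (hW : W ∈ sortedWords K 2 1)
    (hW' : W' ∈ sortedWords K 2 1) (hprod : W.prod = W'.prod) (hc : IsCoxeterLike K W.prod) :
    W ≈ₕ W' := by
  obtain ⟨x, hx, y, hy, hxy, hWxy⟩ := hK.exists_equiv_square_inv hW hc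
  obtain ⟨u, hu, v, hv, huv, hWuv⟩ := hK.exists_equiv_square_inv hW' (hprod ▸ hc)
  have prod_eq {x y : G} (hx : x ∈ K) : [x, x, y⁻¹].prod = (y * x)⁻¹ := by
    simp [hK.inv_eq_sq hx, sq, mul_assoc]
  have heq : v * u = y * x := by
    rw [← _root_.inv_inj, ← prod_eq hx, ← prod_eq hu, ← hWxy.prod_eq, ← hWuv.prod_eq, hprod]
  exact hWxy.trans ((hK.square_inv_equiv_of_prod_eq hx hy hu hv hxy huv heq).trans hWuv.symm)

theorem equiv_of_mem_sortedWords_of_le (hK : IsTetrahedral K) (hlk : l ≤ k)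
    (hW : W ∈ sortedWords K k l) (hW' : W' ∈ sortedWords K k l) (hprod : W.prod = W'.prod)
    (hc : IsCoxeterLike K W.prod) : W ≈ₕ W' := by
  induction l generalizing k W W' with
  | zero =>
    obtain ⟨P, M, rfl, hP, -, hPlen, hMlen⟩ := hW
    obtain ⟨P', M', rfl, hP', -, hPlen', hMlen'⟩ := hW'
    obtain rfl := List.length_eq_zero_iff.1 hMlen
    obtain rfl := List.length_eq_zero_iff.1 hMlen'
    simp only [List.append_nil] at *
    exact hK.equiv_of_prod_eq_of_length_eq hP hP' (hPlen.trans hPlen'.symm) hprod hc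
  | succ l ih =>
    obtain ⟨k, rfl⟩ := Nat.exists_eq_add_of_le' (show 1 ≤ k by lia)
    obtain hkl | hkl := Nat.lt_or_ge (k + l) 2
    · have h₃ : ¬ 3 ∣ k + 1 + 2 * (l + 1) := by
        obtain ⟨P, M, rfl, hP, hM, hPlen, hMlen⟩ := hW
        exact hPlen ▸ hMlen ▸ hK.not_three_dvd_length hP hM hc
      obtain ⟨rfl, rfl⟩ : k = 1 ∧ l = 0 := by lia
      exact hK.equiv_of_mem_sortedWords_two_one hW hW' hprod hc
    obtain ⟨a, ha, V, hV, hWV⟩ := hK.exists_equiv_cancelling_pair hW (by lia) hkl hc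
    obtain ⟨b, hb, V', hV', hWV'⟩ := hK.exists_equiv_cancelling_pair hW' (by lia) hkl (hprod ▸ hc)
    have hVprod : W.prod = V.prod := by simpa using hWV.prod_eq
    have hVprod' : W'.prod = V'.prod := by simpa using hWV'.prod_eq
    rw [hVprod] at hc
    calc W ≈ₕ a :: a⁻¹ :: V := hWV
      _ ≈ₕ b :: b⁻¹ :: V :=
        hK.cancelling_pair_append_equiv ha hb (mem_union_inv_of_mem_sortedWords hV) hc
      _ ≈ₕ b :: b⁻¹ :: V' :=
        (ih (by lia) hV hV' (hVprod ▸ hVprod' ▸ hprod) hc).append_left [b, b⁻¹]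
      _ ≈ₕ W' := hWV'.symm

theorem equiv_of_mem_sortedWords (hK : IsTetrahedral K) (hW : W ∈ sortedWords K k l)
    (hW' : W' ∈ sortedWords K k l) (hprod : W.prod = W'.prod) (hc : IsCoxeterLike K W.prod) :
    W ≈ₕ W' := by
  obtain hlk | hkl := Nat.le_total l k
  · exact hK.equiv_of_mem_sortedWords_of_le hlk hW hW' hprod hc
  obtain ⟨V, hV, hWV⟩ := hK.exists_equiv_mem_sortedWords_inv hW
  obtain ⟨V', hV', hWV'⟩ := hK.exists_equiv_mem_sortedWords_inv hW'
  refine hWV.trans (.trans ?_ hWV'.symm)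
  exact hK.inv.equiv_of_mem_sortedWords_of_le hkl hV hV'
    (by rw [← hWV.prod_eq, ← hWV'.prod_eq, hprod]) (hWV.prod_eq ▸ hc.inv_left)

theorem exists_equiv_mem_sortedWords (hK : IsTetrahedral K) (hW : ∀ x ∈ W, x ∈ K ∪ K⁻¹) :
    ∃ k l, ∃ W' ∈ sortedWords K k l, W ≈ₕ W' := by
  induction W with
  | nil => exact ⟨_, _, _, append_mem_sortedWords (P := []) (M := []) (by simp) (by simp), .refl _⟩
  | cons x W ih =>
    rw [List.forall_mem_cons] at hW
    obtain ⟨_, _, _, ⟨P, M, rfl, hP, hM, -, -⟩, hWPM⟩ := ih hW.2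
    rcases hW.1 with hx | hx
    · exact ⟨_, _, _, append_mem_sortedWords (List.forall_mem_cons.2 ⟨hx, hP⟩) hM, hWPM.cons x⟩
    · refine ⟨_, _, _, append_mem_sortedWords hP (List.forall_mem_append.2 ⟨hM, ?_⟩),
        List.append_assoc P M _ ▸ (hWPM.cons x).trans (.cons_equiv_concat x _)⟩
      simpa [mul_assoc] using hK.inv.conj_mem (P ++ M).prod⁻¹ x hx

end IsTetrahedral

end SortedWords

section Counting

open scoped Pointwise

variable {G : Type*} [Group G] {K : Set G} {s t : G} {W W' : List G} {k l : ℕ}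

/-- The number of letters of a word lying in `K`. -/
def letterCount {α : Type*} (K : Set α) (W : List α) : ℕ :=
  open scoped Classical in W.countP (· ∈ K)

theorem HurwitzEquiv.letterCount_eq (hK : ∀ g, ∀ x ∈ K, g * x * g⁻¹ ∈ K) (h : W ≈ₕ W') :
    letterCount K W = letterCount K W' := by
  classical
  refine h.map_eq fun u x y v => ?_
  simp only [letterCount, List.countP_append, List.countP_cons,
    decide_eq_decide.2 (inv_mul_mul_mem_iff hK (x := x) (y := y))]
  rw [add_right_comm (List.countP _ v)]

theorem letterCount_of_mem_sortedWords (hdisj : Disjoint K K⁻¹) (hW : W ∈ sortedWords K k l) :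
    letterCount K W = k := by
  obtain ⟨P, M, rfl, hP, hM, rfl, rfl⟩ := hW
  have hM' : ∀ x ∈ M, x ∉ K := fun x hx => Set.disjoint_right.1 hdisj (hM x hx)
  rw [letterCount, List.countP_append, List.countP_eq_length.2 (by simpa using hP),
    List.countP_eq_zero.2 (by simpa using hM'), add_zero]

theorem length_of_mem_sortedWords (hW : W ∈ sortedWords K k l) : W.length = k + l := by
  obtain ⟨P, M, rfl, -, -, rfl, rfl⟩ := hW
  exact List.length_append

theorem exists_mem_sortedWords_succ_succ (hs : s ∈ K) (hW : W ∈ sortedWords K k l) :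
    ∃ W' ∈ sortedWords K (k + 1) (l + 1), W'.prod = W.prod := by
  obtain ⟨P, M, rfl, hP, hM, rfl, rfl⟩ := hW
  refine ⟨P ++ [s] ++ s⁻¹ :: M, ⟨P ++ [s], s⁻¹ :: M, rfl, ?_, ?_, by simp, by simp⟩, by simp⟩
  · simpa [or_imp, forall_and] using ⟨hP, hs⟩
  · simpa [hs] using hM

namespace IsTetrahedral

theorem disjoint_inv_of_mem_sortedWords (hK : IsTetrahedral K) (hW : W ∈ sortedWords K k l)
    (hc : IsCoxeterLike K W.prod) : Disjoint K K⁻¹ := by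
  obtain ⟨P, M, rfl, hP, hM, -, -⟩ := hW
  exact hK.disjoint_inv hP hM hc

theorem exists_equiv_mem_sortedWords_letterCount (hK : IsTetrahedral K)
    (hW : ∀ x ∈ W, x ∈ K ∪ K⁻¹) (hc : IsCoxeterLike K W.prod) :
    letterCount K W ≤ W.length ∧
      ∃ V ∈ sortedWords K (letterCount K W) (W.length - letterCount K W), W ≈ₕ V := by
  obtain ⟨k, l, V, hV, hWV⟩ := hK.exists_equiv_mem_sortedWords hW
  have hdisj := hK.disjoint_inv_of_mem_sortedWords hV (hWV.prod_eq ▸ hc)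
  have hcount : letterCount K W = k :=
    (hWV.letterCount_eq hK.conj_mem).trans (letterCount_of_mem_sortedWords hdisj hV)
  have hlen : W.length = k + l := hWV.length_eq.trans (length_of_mem_sortedWords hV)
  rw [hcount, hlen, Nat.add_sub_cancel_left]
  exact ⟨Nat.le_add_right k l, V, hV, hWV⟩

theorem equiv_iff_letterCount_eq (hK : IsTetrahedral K) (hW : ∀ x ∈ W, x ∈ K ∪ K⁻¹)
    (hW' : ∀ x ∈ W', x ∈ K ∪ K⁻¹) (hlen : W.length = W'.length) (hprod : W.prod = W'.prod)
    (hc : IsCoxeterLike K W.prod) : W ≈ₕ W' ↔ letterCount K W = letterCount K W' := by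
  refine ⟨fun h => h.letterCount_eq hK.conj_mem, fun hcount => ?_⟩
  obtain ⟨-, V, hV, hWV⟩ := hK.exists_equiv_mem_sortedWords_letterCount hW hc
  obtain ⟨-, V', hV', hWV'⟩ := hK.exists_equiv_mem_sortedWords_letterCount hW' (hprod ▸ hc)
  rw [← hcount, ← hlen] at hV'
  have hVprod : V.prod = V'.prod := by rw [← hWV.prod_eq, ← hWV'.prod_eq, hprod]
  exact hWV.trans ((hK.equiv_of_mem_sortedWords hV hV' hVprod (hWV.prod_eq ▸ hc)).trans hWV'.symm)

theorem mod_three_eq_two (hK : IsTetrahedral K) (hs : s ∈ K) (ht : t ∈ K)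
    (hW : W ∈ sortedWords K k l) (hprod : W.prod = s * t) (hc : IsCoxeterLike K (s * t)) :
    (k + 2 * l) % 3 = 2 := by
  obtain ⟨P, M, rfl, hP, hM, rfl, rfl⟩ := hW
  have horder := hK.orderOf_abelianization_of hP hM (hprod ▸ hc) hs
  have hof := hK.abelianization_of_prod hP hM hs
  rw [hprod, map_mul, hK.abelianization_of_eq ht hs, ← sq, pow_eq_pow_iff_modEq, horder] at hof
  exact hof.symm

theorem exists_mem_sortedWords_add_three (hK : IsTetrahedral K) (hs : s ∈ K)
    (hW : W ∈ sortedWords K k l) : ∃ W' ∈ sortedWords K (k + 3) l, W'.prod = W.prod := by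
  obtain ⟨P, M, rfl, hP, hM, rfl, rfl⟩ := hW
  refine ⟨s :: s :: s :: (P ++ M), ⟨s :: s :: s :: P, M, rfl, ?_, hM, by simp, rfl⟩,
    hK.prod_cube_cons hs⟩
  simpa [hs] using hP

theorem exists_mem_sortedWords_add_three_right (hK : IsTetrahedral K) (hs : s ∈ K)
    (hW : W ∈ sortedWords K k l) : ∃ W' ∈ sortedWords K k (l + 3), W'.prod = W.prod := by
  obtain ⟨P, M, rfl, hP, hM, rfl, rfl⟩ := hW
  have hs' : s⁻¹ ∈ K⁻¹ := Set.inv_mem_inv.2 hs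
  refine ⟨_, ⟨P, s⁻¹ :: s⁻¹ :: s⁻¹ :: M, rfl, hP, ?_, rfl, by simp⟩, ?_⟩
  · simpa [hs] using hM
  · rw [List.prod_append, List.prod_append, hK.inv.prod_cube_cons hs']

theorem exists_mem_sortedWords_prod_eq (hK : IsTetrahedral K) (hs : s ∈ K) (ht : t ∈ K)
    (hkl : 2 ≤ k + l) (hmod : (k + 2 * l) % 3 = 2) :
    ∃ W ∈ sortedWords K k l, W.prod = s * t := by
  have inv_mul_inv {x : G} (hx : x ∈ K) : x⁻¹ * x⁻¹ = x := by
    simpa [← sq] using (hK.inv.inv_eq_sq (Set.inv_mem_inv.2 hx)).symm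
  induction hn : k + l using Nat.strong_induction_on generalizing k l with
  | _ n ih =>
    obtain ⟨rfl, rfl⟩ | ⟨rfl, rfl⟩ | ⟨rfl, rfl⟩ | ⟨hk, hl, h⟩ | ⟨hk, h⟩ | ⟨hl, h⟩ :
        (k = 2 ∧ l = 0) ∨ (k = 1 ∧ l = 2) ∨ (k = 0 ∧ l = 4) ∨
        (1 ≤ k ∧ 1 ≤ l ∧ 4 ≤ k + l) ∨ (3 ≤ k ∧ 5 ≤ k + l) ∨ (3 ≤ l ∧ 5 ≤ k + l) := by lia
    · exact ⟨_, ⟨[s, t], [], rfl, by simp [hs, ht], by simp, rfl, rfl⟩, by simp⟩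
    · refine ⟨_, ⟨[s], [t⁻¹, t⁻¹], rfl, by simp [hs], by simp [ht], rfl, rfl⟩, ?_⟩
      simp [inv_mul_inv ht]
    · refine ⟨_, ⟨[], [s⁻¹, s⁻¹, t⁻¹, t⁻¹], rfl, by simp, by simp [hs, ht], rfl, rfl⟩, ?_⟩
      simp [← mul_assoc s⁻¹ s⁻¹, inv_mul_inv hs, inv_mul_inv ht]
    · obtain ⟨k, rfl⟩ := Nat.exists_eq_add_of_le' hk
      obtain ⟨l, rfl⟩ := Nat.exists_eq_add_of_le' hl
      obtain ⟨W, hW, hprod⟩ := ih (k + l) (by lia) (by lia) (by lia) rfl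
      obtain ⟨W', hW', hprod'⟩ := exists_mem_sortedWords_succ_succ hs hW
      exact ⟨W', hW', hprod'.trans hprod⟩
    · obtain ⟨k, rfl⟩ := Nat.exists_eq_add_of_le' hk
      obtain ⟨W, hW, hprod⟩ := ih (k + l) (by lia) (by lia) (by lia) rfl
      obtain ⟨W', hW', hprod'⟩ := hK.exists_mem_sortedWords_add_three hs hW
      exact ⟨W', hW', hprod'.trans hprod⟩
    · obtain ⟨l, rfl⟩ := Nat.exists_eq_add_of_le' hl
      obtain ⟨W, hW, hprod⟩ := ih (k + l) (by lia) (by lia) (by lia) rfl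
      obtain ⟨W', hW', hprod'⟩ := hK.exists_mem_sortedWords_add_three_right hs hW
      exact ⟨W', hW', hprod'.trans hprod⟩

end IsTetrahedral

end Counting

section Tuples

open scoped Pointwise

theorem ncard_mod_three_eq_two (m : ℕ) :
    {k | k ≤ m ∧ (k + 2 * (m - k)) % 3 = 2}.ncard = (m + 2) / 3 := by
  have image_eq : {k | k ≤ m ∧ (k + 2 * (m - k)) % 3 = 2} =
      (fun j => 3 * j + (2 * m + 1) % 3) '' Finset.range ((m + 2) / 3) := by
    ext k
    simp only [Set.mem_ofPred_eq, Finset.coe_range, Set.mem_image, Set.mem_Iio]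
    obtain ⟨q, rfl | rfl | rfl⟩ : ∃ q, m = 3 * q ∨ m = 3 * q + 1 ∨ m = 3 * q + 2 :=
      ⟨m / 3, by lia⟩
    all_goals exact ⟨fun h => ⟨k / 3, by lia, by lia⟩, by rintro ⟨j, hj, rfl⟩; omega⟩
  rw [image_eq, Set.ncard_image_of_injective _ fun a b h => by simpa using h,
    Set.ncard_coe_finset, Finset.card_range]

variable {m : ℕ}

theorem ofFn_getD {α : Type*} {l : List α} (d : α) (hl : l.length = m) :
    List.ofFn (fun i : Fin m => l.getD i d) = l := by
  subst hl
  exact List.ext_getElem (by simp) (by simp)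

variable {G : Type*} [Group G]

theorem IsHurwitzMove.hurwitzEquiv {t t' : Fin m → G} (h : IsHurwitzMove t t') :
    List.ofFn t ≈ₕ List.ofFn t' := by
  obtain ⟨i, hi, hfst, hsnd, hrest⟩ := h
  have split (s : Fin m → G) : List.ofFn s = (List.ofFn s).take i ++
      s ⟨i, Nat.lt_of_succ_lt hi⟩ :: s ⟨i + 1, hi⟩ :: (List.ofFn s).drop (i + 2) := by
    conv_lhs => rw [← List.take_append_drop i (List.ofFn s)]
    rw [List.drop_eq_getElem_cons (by simpa using Nat.lt_of_succ_lt hi),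
      List.drop_eq_getElem_cons (by simpa using hi), List.getElem_ofFn, List.getElem_ofFn]
  have take_eq : (List.ofFn t').take i = (List.ofFn t).take i :=
    List.ext_getElem (by simp) fun j hj _ => by
      rw [List.length_take] at hj
      simpa using hrest ⟨j, by lia⟩ (by simp; lia) (by simp; lia)
  have drop_eq : (List.ofFn t').drop (i + 2) = (List.ofFn t).drop (i + 2) :=
    List.ext_getElem (by simp) fun j hj _ => by
      rw [List.length_drop, List.length_ofFn] at hj
      simpa using hrest ⟨i + 2 + j, by lia⟩ (by simp; lia) (by simp; lia)
  rw [split t, split t', take_eq, drop_eq, hfst, hsnd]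
  exact .of_step _ _ _ _

theorem isHurwitzMove_getD {u v : List G} {x y : G} (hlen : (u ++ x :: y :: v).length = m) :
    IsHurwitzMove (fun i : Fin m => (u ++ x :: y :: v).getD i 1)
      (fun i : Fin m => (u ++ y :: (y⁻¹ * x * y) :: v).getD i 1) := by
  simp only [List.length_append, List.length_cons] at hlen
  refine ⟨u.length, by lia, by simp, by simp, fun j hj hj' => ?_⟩
  obtain hju | hju := Nat.lt_or_ge j u.length
  · simp [List.getElem?_append_left hju]
  · obtain ⟨k, hk⟩ := Nat.exists_eq_add_of_le (show u.length + 2 ≤ j by lia)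
    simp [hk, List.getElem?_append_right, Nat.add_assoc, Nat.add_comm 2]

theorem HurwitzEquiv.sameHurwitzOrbit_getD {l l' : List G} (h : l ≈ₕ l') (hl : l.length = m) :
    SameHurwitzOrbit (fun i : Fin m => l.getD i 1) (fun i : Fin m => l'.getD i 1) := by
  induction h with
  | rel _ _ h =>
    obtain ⟨u, x, y, v⟩ := h
    exact .rel _ _ (isHurwitzMove_getD hl)
  | refl _ => exact .refl _
  | symm _ _ h ih => exact .symm _ _ (ih ((HurwitzEquiv.length_eq h).trans hl))
  | trans _ _ _ h _ ih ih' =>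
    exact .trans _ _ _ (ih hl) (ih' ((HurwitzEquiv.length_eq h).symm.trans hl))

theorem sameHurwitzOrbit_iff {t t' : Fin m → G} :
    SameHurwitzOrbit t t' ↔ List.ofFn t ≈ₕ List.ofFn t' := by
  constructor
  · intro h
    induction h with
    | rel _ _ h => exact h.hurwitzEquiv
    | refl _ => exact .refl _
    | symm _ _ _ ih => exact ih.symm
    | trans _ _ _ _ _ ih ih' => exact ih.trans ih'
  · exact fun h => by simpa using h.sameHurwitzOrbit_getD List.length_ofFn

theorem IsTetrahedral.setOf_sameHurwitzOrbit_eq {K : Set G} {c : G} (hK : IsTetrahedral K)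
    (hc : IsCoxeterLike K c) {t : Fin m → G} (ht : ∀ i, t i ∈ K ∪ K⁻¹)
    (hprod : (List.ofFn t).prod = c) :
    {s | SameHurwitzOrbit t s} = {s | ((∀ i, s i ∈ K ∪ K⁻¹) ∧ (List.ofFn s).prod = c) ∧
      letterCount K (List.ofFn s) = letterCount K (List.ofFn t)} := by
  have conj_mem : ∀ g, ∀ x ∈ K ∪ K⁻¹, g * x * g⁻¹ ∈ K ∪ K⁻¹ := fun g x hx =>
    hx.imp (hK.conj_mem g x) (hK.inv.conj_mem g x)
  rw [← List.forall_mem_ofFn_iff] at ht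
  ext s
  rw [Set.mem_ofPred_eq, Set.mem_ofPred_eq, sameHurwitzOrbit_iff, ← List.forall_mem_ofFn_iff]
  constructor
  · intro h
    exact ⟨⟨(h.forall_mem_iff conj_mem).1 ht, h.prod_eq.symm.trans hprod⟩,
      (h.letterCount_eq hK.conj_mem).symm⟩
  · rintro ⟨⟨hs, hs'⟩, hcount⟩
    exact (hK.equiv_iff_letterCount_eq ht hs (by simp) (hprod.trans hs'.symm)
      (hprod.symm ▸ hc)).2 hcount.symm

theorem IsTetrahedral.exists_letterCount_eq_iff {K : Set G} {a b : G} (hK : IsTetrahedral K)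
    (ha : a ∈ K) (hb : b ∈ K) (hc : IsCoxeterLike K (a * b)) (hm : 2 ≤ m) {k : ℕ} :
    (∃ t : Fin m → G, ((∀ i, t i ∈ K ∪ K⁻¹) ∧ (List.ofFn t).prod = a * b) ∧
      letterCount K (List.ofFn t) = k) ↔ k ≤ m ∧ (k + 2 * (m - k)) % 3 = 2 := by
  constructor
  · rintro ⟨t, ⟨ht, hprod⟩, rfl⟩
    rw [← List.forall_mem_ofFn_iff] at ht
    obtain ⟨hle, V, hV, htV⟩ :=
      hK.exists_equiv_mem_sortedWords_letterCount ht (hprod.symm ▸ hc)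
    rw [List.length_ofFn] at hle hV
    exact ⟨hle, hK.mod_three_eq_two ha hb hV (htV.prod_eq.symm.trans hprod) hc⟩
  · rintro ⟨hle, hmod⟩
    obtain ⟨W, hW, hprod⟩ := hK.exists_mem_sortedWords_prod_eq ha hb (by lia) hmod
    have hofFn := ofFn_getD 1 ((length_of_mem_sortedWords hW).trans (Nat.add_sub_cancel' hle))
    refine ⟨fun i => W.getD i 1, ?_⟩
    rw [← List.forall_mem_ofFn_iff, hofFn]
    exact ⟨⟨mem_union_inv_of_mem_sortedWords hW, hprod⟩, letterCount_of_mem_sortedWords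
      (hK.disjoint_inv_of_mem_sortedWords hW (hprod.symm ▸ hc)) hW⟩

theorem IsTetrahedral.ncard_hurwitz_orbits {K : Set G} {a b : G} (hK : IsTetrahedral K)
    (ha : a ∈ K) (hb : b ∈ K) (hc : IsCoxeterLike K (a * b)) (hm : 2 ≤ m) :
    {S : Set (Fin m → G) | ∃ t : Fin m → G, (∀ i, t i ∈ K ∪ K⁻¹) ∧
      (List.ofFn t).prod = a * b ∧ S = {s | SameHurwitzOrbit t s}}.ncard = (m + 2) / 3 := by
  let fibre (k : ℕ) : Set (Fin m → G) :=
    {s | ((∀ i, s i ∈ K ∪ K⁻¹) ∧ (List.ofFn s).prod = a * b) ∧ letterCount K (List.ofFn s) = k}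
  have hfibre (k : ℕ) : (fibre k).Nonempty ↔ k ≤ m ∧ (k + 2 * (m - k)) % 3 = 2 :=
    hK.exists_letterCount_eq_iff ha hb hc hm
  have orbits_eq : {S : Set (Fin m → G) | ∃ t : Fin m → G, (∀ i, t i ∈ K ∪ K⁻¹) ∧
      (List.ofFn t).prod = a * b ∧ S = {s | SameHurwitzOrbit t s}} =
      fibre '' {k | (fibre k).Nonempty} := by
    ext S
    constructor
    · rintro ⟨t, ht, hprod, rfl⟩
      exact ⟨_, ⟨t, ⟨ht, hprod⟩, rfl⟩, (hK.setOf_sameHurwitzOrbit_eq hc ht hprod).symm⟩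
    · rintro ⟨_, ⟨t, ⟨ht, hprod⟩, rfl⟩, rfl⟩
      exact ⟨t, ht, hprod, (hK.setOf_sameHurwitzOrbit_eq hc ht hprod).symm⟩
  have fibre_injOn : Set.InjOn fibre {k | (fibre k).Nonempty} := by
    rintro k ⟨s, hs⟩ k' - heq
    exact hs.2.symm.trans (heq ▸ hs : s ∈ fibre k').2
  rw [orbits_eq, fibre_injOn.ncard_image]
  simp only [hfibre]
  exact ncard_mod_three_eq_two m

end Tuples

section Generation

open scoped Pointwise

variable {G : Type*} [Group G] {a b c d x y z w : G}

namespace IsFrame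

theorem pow_three_mul_comm (h : IsFrame x y z w) : (y * x) ^ 3 = (x * y) ^ 3 := by
  have braid : x * y * x = y * x * y := by rw [h.xy, mul_assoc, ← h.yz, ← h.xy, mul_assoc]
  calc (y * x) ^ 3 = (y * x * y) * (x * y * x) := by rw [_root_.pow_three]; group
    _ = (x * y * x) * (y * x * y) := by rw [braid]
    _ = (x * y) ^ 3 := by rw [_root_.pow_three]; group

theorem pow_three_mul (h : IsFrame x y z w) : (x * y) ^ 3 = (x⁻¹ * y) ^ 2 := by
  have sq_x : x * x = x⁻¹ := by rw [eq_inv_iff_mul_eq_one, ← pow_three', h.pow_three]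
  have x_mul_y_mul_x : x * y * x = x⁻¹ * w := by rw [mul_assoc, h.yx, ← mul_assoc, sq_x]
  calc (x * y) ^ 3 = (x * y * x) * y * (x * y) := by rw [_root_.pow_three]; group
    _ = x⁻¹ * (w * y) * x * y := by rw [x_mul_y_mul_x]; group
    _ = x⁻¹ * (x * w) * x * y := by rw [h.xw]
    _ = x⁻¹ * (y * (x * x)) * y := by rw [← h.yx]; group
    _ = (x⁻¹ * y) ^ 2 := by rw [sq_x, sq]; group

theorem exists_frame_left (h : IsFrame a b c d) (hx : x ∈ ({a, b, c, d} : Set G)) :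
    ∃ y z w, IsFrame x y z w ∧ ({a, b, c, d} : Set G) = {x, y, z, w} ∧
      (x * y) ^ 3 = (a * b) ^ 3 := by
  rcases hx with rfl | rfl | rfl | rfl
  · exact ⟨b, c, d, h, rfl, rfl⟩
  · exact ⟨a, d, c, h.swap, by grind, h.pow_three_mul_comm⟩
  · exact ⟨a, b, d, h.rotate_w.rotate_w, by grind, by rw [← h.yz, ← h.xy]⟩
  · exact ⟨b, a, c, h.swap.rotate_w.rotate_w, by grind,
      by rw [← h.xw, ← h.yx, h.pow_three_mul_comm]⟩

theorem exists_frame_right (h : IsFrame x b c d) (hy : y ∈ ({x, b, c, d} : Set G)) (hxy : x ≠ y) :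
    ∃ z w, IsFrame x y z w ∧ ({x, b, c, d} : Set G) = {x, y, z, w} ∧
      (x * y) ^ 3 = (x * b) ^ 3 := by
  rcases hy with rfl | rfl | rfl | rfl
  · contradiction
  · exact ⟨c, d, h, rfl, rfl⟩
  · exact ⟨d, b, h.swap.rotate_z, by grind,
      by rw [h.rotate_w.rotate_w.pow_three_mul_comm, ← h.yz, ← h.xy]⟩
  · exact ⟨b, c, h.swap.rotate_w, by grind, by rw [← h.yx, h.pow_three_mul_comm]⟩

theorem exists_frame (h : IsFrame a b c d) (hx : x ∈ ({a, b, c, d} : Set G))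
    (hy : y ∈ ({a, b, c, d} : Set G)) (hxy : x ≠ y) :
    ∃ z w, IsFrame x y z w ∧ ({a, b, c, d} : Set G) = {x, y, z, w} ∧
      (x * y) ^ 3 = (a * b) ^ 3 := by
  obtain ⟨p, q, r, h', heq, hpow⟩ := h.exists_frame_left hx
  rw [heq] at hy ⊢
  rw [← hpow]
  exact h'.exists_frame_right hy hxy

theorem mem_normalizer (h : IsFrame x y z w) :
    x ∈ Subgroup.normalizer ({x, y, z, w} : Set G) := by
  apply Subgroup.mem_normalizer_fintype
  rintro g (rfl | rfl | rfl | rfl)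
  · simp
  · simp [h.xy, h.yz]
  · simp [h.xz, h.zw]
  · simp [← h.yx]

theorem isTetrahedral (h : IsFrame a b c d) (hgen : Subgroup.closure {a, b} = ⊤) :
    IsTetrahedral ({a, b, c, d} : Set G) where
  conj_mem g := by
    have normalizer_eq_top : Subgroup.normalizer ({a, b, c, d} : Set G) = ⊤ := by
      rw [eq_top_iff, ← hgen, Subgroup.closure_le, Set.pair_subset_iff]
      refine ⟨h.mem_normalizer, ?_⟩
      have swap_eq : ({a, b, c, d} : Set G) = {b, a, d, c} := by grind
      rw [swap_eq]
      exact h.swap.mem_normalizer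
    exact fun x => (Subgroup.mem_set_normalizer_iff.1 (normalizer_eq_top ▸ Subgroup.mem_top g) x).1
  pow_three x hx := by
    obtain ⟨y, z, w, h', -⟩ := h.exists_frame_left hx
    exact h'.pow_three
  exists_frame x hx y hy hxy := by
    obtain ⟨z, w, h', heq, -⟩ := h.exists_frame hx hy hxy
    exact ⟨z, w, h', heq⟩

end IsFrame

namespace IsTetrahedral

variable {K : Set G} {P : List G}

theorem pow_cases (hK : IsTetrahedral K) (hx : x ∈ K) (n : ℕ) :
    x ^ n = 1 ∨ x ^ n ∈ K ∪ K⁻¹ := by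
  rw [pow_eq_pow_mod n (hK.pow_three x hx)]
  have hlt : n % 3 < 3 := n.mod_lt (by simp)
  interval_cases n % 3
  · exact .inl (pow_zero x)
  · exact .inr (.inl (by rwa [pow_one]))
  · exact .inr (.inr (by rwa [← hK.inv_eq_sq hx, Set.inv_mem_inv]))

theorem prod_of_length_eq_three (hK : IsTetrahedral K) (hP : ∀ x ∈ P, x ∈ K)
    (hlen : P.length = 3) (hpair : HasDistinctPair P) :
    ∃ x ∈ K, ∃ y ∈ K, x ≠ y ∧ (P.prod = x⁻¹ * y ∨ P.prod = (x⁻¹ * y) ^ 2) := by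
  obtain ⟨P', p, x, y, hequiv, hxy, hmem⟩ := hK.exists_equiv_concat_triple hP hlen.ge hpair
  obtain rfl : P' = [] := by simpa [hlen] using hequiv.length_eq
  simp only [List.nil_append, List.forall_mem_cons] at hmem
  obtain ⟨hp, hx, hy, -⟩ := hmem
  have prod_double (u v : G) (hu : u ∈ K) (h : P ≈ₕ [u, u, v]) : P.prod = u⁻¹ * v := by
    simp [h.prod_eq, hK.inv_eq_sq hu, sq, mul_assoc]
  obtain ⟨z, w, h, rfl⟩ := hK.exists_frame x hx y hy hxy
  rcases hp with rfl | rfl | rfl | rfl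
  · exact ⟨p, hx, y, hy, hxy, .inl (prod_double _ _ hx hequiv)⟩
  · exact ⟨p, hy, z, by simp, h.y_ne_z hxy,
      .inl (prod_double _ _ hy (hequiv.trans h.yxy_equiv_yyz))⟩
  · exact ⟨p, by simp, x, hx, h.z_ne_x hxy,
      .inl (prod_double _ _ (by simp) (hequiv.trans h.zxy_equiv_zzx))⟩
  · refine ⟨x, hx, y, hy, hxy, .inr ?_⟩
    have w_eq : p = x⁻¹ * y * x := by rw [mul_assoc, h.yx, inv_mul_cancel_left]
    calc P.prod = p * (x * y) := by simpa using hequiv.prod_eq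
      _ = x⁻¹ * y * (x ^ 2) * y := by rw [w_eq, sq]; group
      _ = (x⁻¹ * y) ^ 2 := by rw [← hK.inv_eq_sq hx, sq, mul_assoc, mul_assoc]

theorem prod_cases (hK : IsTetrahedral K) (hP : ∀ x ∈ P, x ∈ K) :
    P.prod = 1 ∨ P.prod ∈ K ∪ K⁻¹ ∨ ∃ x ∈ K, ∃ y ∈ K, x ≠ y ∧ (P.prod = x * y ∨
      P.prod = (x * y)⁻¹ ∨ P.prod = x⁻¹ * y ∨ P.prod = (x⁻¹ * y) ^ 2) := by
  induction hn : P.length using Nat.strong_induction_on generalizing P with | _ n ih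
  obtain rfl | hne := eq_or_ne P []
  · exact .inl rfl
  obtain ⟨u, hu⟩ | hpair := eq_replicate_or_hasDistinctPair P hne
  · have hmem : u ∈ K := hP u (by rw [hu]; simpa using hne)
    rw [hu, List.prod_replicate]
    exact (hK.pow_cases hmem _).imp_right .inl
  have two_le := hpair.two_le_length
  obtain htwo | hthree | hfour | hfive :
      P.length = 2 ∨ P.length = 3 ∨ P.length = 4 ∨ 5 ≤ P.length := by lia
  · obtain ⟨x, y, rfl⟩ := List.length_eq_two.1 htwo
    exact .inr (.inr ⟨x, hP x (by simp), y, hP y (by simp), hasDistinctPair_pair_iff.1 hpair,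
      .inl (by simp)⟩)
  · obtain ⟨x, hx, y, hy, hxy, hprod⟩ := hK.prod_of_length_eq_three hP hthree hpair
    exact .inr (.inr ⟨x, hx, y, hy, hxy, .inr (.inr hprod)⟩)
  · obtain hprod | ⟨x, hx, y, hy, hxy, hequiv⟩ :=
      hK.prod_mem_or_exists_equiv_squares hP hfour hpair
    · exact .inr (.inl (.inl hprod))
    · exact .inr (.inr ⟨y, hy, x, hx, hxy.symm,
        .inr (.inl (hequiv.prod_eq.trans (hK.prod_squares hx hy)))⟩)
  · obtain ⟨x, P', hequiv⟩ := hK.exists_equiv_triple_cons hP hfive hpair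
    have hmem := (hequiv.forall_mem_iff hK.conj_mem).1 hP
    have hlen := hequiv.length_eq
    simp only [List.length_cons] at hlen
    rw [hequiv.prod_eq, hK.prod_cube_cons (hmem x (by simp))]
    exact ih P'.length (by lia) (fun g hg => hmem g (by simp [hg])) rfl

theorem exists_list_prod_eq (hK : IsTetrahedral K) {g : G} (hg : g ∈ Subgroup.closure K) :
    ∃ P : List G, (∀ x ∈ P, x ∈ K) ∧ P.prod = g := by
  have finite_order : ∀ x ∈ K, IsOfFinOrder x := fun x hx =>
    isOfFinOrder_iff_pow_eq_one.2 ⟨3, by simp, hK.pow_three x hx⟩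
  apply Submonoid.exists_list_of_mem_closure
  rwa [← Subgroup.closure_toSubmonoid_of_isOfFinOrder finite_order]

end IsTetrahedral

end Generation

section Matrices

variable {n R : Type*} [Fintype n] [DecidableEq n] [CommRing R] {M : Matrix n n R} {ζ η : R}

theorem det_pow_sub_smul_one_eq_zero (h : (M - ζ • (1 : Matrix n n R)).det = 0) (k : ℕ) :
    (M ^ k - ζ ^ k • (1 : Matrix n n R)).det = 0 := by
  have hdvd := (((Commute.one_right M).smul_right ζ).sub_dvd_pow_sub_pow k)
  rw [smul_pow, one_pow] at hdvd
  obtain ⟨N, hN⟩ := hdvd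
  rw [hN, det_mul, h, zero_mul]

theorem pow_eq_of_pow_eq_smul_one [IsDomain R]
    (h : (M - ζ • (1 : Matrix n n R)).det = 0) {k : ℕ} (hM : M ^ k = η • (1 : Matrix n n R)) :
    ζ ^ k = η := by
  have hdet := det_pow_sub_smul_one_eq_zero h k
  rw [hM, ← sub_smul, det_smul, det_one, mul_one] at hdet
  exact (sub_eq_zero.1 (eq_zero_of_pow_eq_zero hdet)).symm

end Matrices

theorem isPrimitiveRoot_ω : IsPrimitiveRoot ω 3 := by
  simpa [ω] using Complex.isPrimitiveRoot_exp 3 (by norm_num)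

theorem ω_sq_add_ω_add_one : ω ^ 2 + ω + 1 = 0 := by
  have h := isPrimitiveRoot_ω.geom_sum_eq_zero (by norm_num)
  simp only [Finset.sum_range_succ, Finset.sum_range_zero, pow_zero, pow_one, zero_add] at h
  linear_combination h

theorem det_AMat : AMat.det = ω := by simp [AMat, det_fin_two]

theorem det_BMat : BMat.det = ω := by
  simp only [BMat, det_fin_two_of]
  grind [ω_sq_add_ω_add_one]

theorem AMat_pow_three : AMat ^ 3 = 1 := by
  ext i j
  fin_cases i <;> fin_cases j <;> simp [AMat, pow_three, mul_apply, Fin.sum_univ_two]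
  grind [ω_sq_add_ω_add_one]

theorem BMat_pow_three : BMat ^ 3 = 1 := by
  ext i j
  fin_cases i <;> fin_cases j <;> simp [BMat, pow_three, mul_apply, Fin.sum_univ_two] <;>
    grind [ω_sq_add_ω_add_one]

theorem AMat_mul_BMat_mul_AMat : AMat * BMat * AMat = BMat * AMat * BMat := by
  ext i j
  fin_cases i <;> fin_cases j <;> simp [AMat, BMat, mul_apply, Fin.sum_univ_two] <;>
    grind [ω_sq_add_ω_add_one]

theorem AMat_mul_BMat_pow_three : (AMat * BMat) ^ 3 = -1 := by
  ext i j
  fin_cases i <;> fin_cases j <;> simp [AMat, BMat, pow_three, mul_apply, Fin.sum_univ_two] <;>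
    grind [ω_sq_add_ω_add_one]

section ShephardTodd

open scoped Pointwise

theorem mat_one : mat 1 = 1 := rfl

theorem mat_mul (g h : G4) : mat (g * h) = mat g * mat h := rfl

theorem mat_pow (g : G4) (k : ℕ) : mat (g ^ k) = mat g ^ k := rfl

theorem mat_injective : Function.Injective mat := fun _ _ h => Subtype.ext (Units.ext h)

theorem ω_ne_zero : ω ≠ 0 := Complex.exp_ne_zero _

/-- The generator of `G₄` with matrix `AMat`. -/
def genA : G4 :=
  ⟨.mkOfDetNeZero AMat (det_AMat ▸ ω_ne_zero), Subgroup.subset_closure (.inl rfl)⟩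

/-- The generator of `G₄` with matrix `BMat`. -/
def genB : G4 :=
  ⟨.mkOfDetNeZero BMat (det_BMat ▸ ω_ne_zero), Subgroup.subset_closure (.inr rfl)⟩

theorem mat_genA : mat genA = AMat := rfl

theorem mat_genB : mat genB = BMat := rfl

theorem closure_genA_genB : Subgroup.closure {genA, genB} = ⊤ := by
  refine top_unique (Subgroup.closure_closure_coe_preimage.ge.trans (Subgroup.closure_mono ?_))
  rintro g (hg | hg)
  · exact .inl (mat_injective hg)
  · exact .inr (mat_injective hg)

/-- The conjugacy class of `genA`: the four reflections of determinant `ω`. -/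
def omegaReflections : Set G4 :=
  {genA, genB, genB⁻¹ * genA * genB, genA⁻¹ * genB * genA}

theorem isFrame_genA_genB :
    IsFrame genA genB (genB⁻¹ * genA * genB) (genA⁻¹ * genB * genA) := by
  apply IsFrame.of_braid <;> apply mat_injective
  · rw [mat_pow, mat_genA, AMat_pow_three, mat_one]
  · rw [mat_pow, mat_genB, BMat_pow_three, mat_one]
  · simp only [mat_mul, mat_genA, mat_genB, AMat_mul_BMat_mul_AMat]

theorem isTetrahedral_omegaReflections : IsTetrahedral omegaReflections :=
  isFrame_genA_genB.isTetrahedral closure_genA_genB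

theorem closure_omegaReflections : Subgroup.closure omegaReflections = ⊤ := by
  rw [eq_top_iff, ← closure_genA_genB]
  exact Subgroup.closure_mono fun g hg => hg.imp_right .inl

variable {x y c t g : G4}

theorem mat_mul_pow_three (hx : x ∈ omegaReflections) (hy : y ∈ omegaReflections) (hxy : x ≠ y) :
    mat ((x * y) ^ 3) = -1 := by
  obtain ⟨-, -, -, -, hpow⟩ := isFrame_genA_genB.exists_frame hx hy hxy
  rw [hpow, mat_pow, mat_mul, mat_genA, mat_genB, AMat_mul_BMat_pow_three]

theorem mat_inv_mul_sq (hx : x ∈ omegaReflections) (hy : y ∈ omegaReflections) (hxy : x ≠ y) :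
    mat ((x⁻¹ * y) ^ 2) = -1 := by
  obtain ⟨z, w, h, -⟩ := isFrame_genA_genB.exists_frame hx hy hxy
  rw [← h.pow_three_mul, mat_mul_pow_three hx hy hxy]

theorem det_mat_conj_sub_smul_one (g h : G4) (ζ : ℂ) :
    (mat (g * h * g⁻¹) - ζ • (1 : Matrix (Fin 2) (Fin 2) ℂ)).det =
      (mat h - ζ • (1 : Matrix (Fin 2) (Fin 2) ℂ)).det := by
  have factor : mat (g * h * g⁻¹) - ζ • (1 : Matrix (Fin 2) (Fin 2) ℂ) =
      mat g * (mat h - ζ • 1) * mat g⁻¹ := by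
    rw [mul_sub, sub_mul, mul_smul_comm, smul_mul_assoc, mul_one, ← mat_mul, ← mat_mul, ← mat_mul,
      mul_inv_cancel, mat_one]
  rw [factor, det_mul_right_comm, ← mat_mul, mul_inv_cancel, mat_one, one_mul]

theorem exists_conj_genA (hx : x ∈ omegaReflections) : ∃ g, g * genA * g⁻¹ = x := by
  obtain ⟨g, -, hg⟩ := isTetrahedral_omegaReflections.exists_conj_eq (H := ⊤)
    (Set.subset_univ _) (.inl rfl) hx
  exact ⟨g, hg⟩

theorem det_mat_of_mem (hx : x ∈ omegaReflections) : (mat x).det = ω := by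
  obtain ⟨g, rfl⟩ := exists_conj_genA hx
  simpa [mat_genA, det_AMat] using det_mat_conj_sub_smul_one g genA 0

theorem mem_or_exists_mul_or_pow_eq_neg_one (hg : g ≠ 1) :
    g ∈ omegaReflections ∪ omegaReflections⁻¹ ∨
    (∃ x ∈ omegaReflections, ∃ y ∈ omegaReflections, x ≠ y ∧ (g = x * y ∨ g = (x * y)⁻¹)) ∨
    mat g = -1 ∨ mat (g ^ 2) = -1 := by
  obtain ⟨P, hP, rfl⟩ := isTetrahedral_omegaReflections.exists_list_prod_eq
    (closure_omegaReflections ▸ Subgroup.mem_top g)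
  obtain h | h | ⟨x, hx, y, hy, hxy, h | h | h | h⟩ := isTetrahedral_omegaReflections.prod_cases hP
  · contradiction
  · exact .inl h
  · exact .inr (.inl ⟨x, hx, y, hy, hxy, .inl h⟩)
  · exact .inr (.inl ⟨x, hx, y, hy, hxy, .inr h⟩)
  · exact .inr (.inr (.inr (h ▸ mat_inv_mul_sq hx hy hxy)))
  · exact .inr (.inr (.inl (h ▸ mat_inv_mul_sq hx hy hxy)))

theorem isReflection_of_mem (hx : x ∈ omegaReflections) : IsReflection x := by
  refine ⟨?_, ?_⟩
  · rintro rfl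
    exact isPrimitiveRoot_ω.ne_one (by simp) (by rw [← det_mat_of_mem hx, mat_one, det_one])
  · obtain ⟨g, rfl⟩ := exists_conj_genA hx
    have eigenvalue := det_mat_conj_sub_smul_one g genA 1
    rw [one_smul, mat_genA] at eigenvalue
    rw [eigenvalue]
    simp [AMat, det_fin_two]

theorem IsReflection.inv (ht : IsReflection t) : IsReflection t⁻¹ := by
  refine ⟨inv_ne_one.2 ht.1, ?_⟩
  have factor : mat t⁻¹ - 1 = mat t⁻¹ * -(mat t - 1) := by
    rw [neg_sub, mul_sub, mul_one, ← mat_mul, inv_mul_cancel, mat_one]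
  rw [factor, det_mul, det_neg, ht.2, mul_zero, mul_zero]

theorem IsReflection.mat_pow_ne_neg_one (ht : IsReflection t) (k : ℕ) : mat (t ^ k) ≠ -1 := by
  intro h
  have hpow : (1 : ℂ) ^ k = -1 :=
    pow_eq_of_pow_eq_smul_one (by rw [one_smul]; exact ht.2) (by rw [← mat_pow, h]; simp)
  norm_num at hpow

theorem isReflection_iff : IsReflection t ↔ t ∈ omegaReflections ∪ omegaReflections⁻¹ := by
  constructor
  · intro ht
    obtain h | ⟨x, hx, y, hy, hxy, rfl | rfl⟩ | h | h := mem_or_exists_mul_or_pow_eq_neg_one ht.1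
    · exact h
    · exact absurd (mat_mul_pow_three hx hy hxy) (ht.mat_pow_ne_neg_one 3)
    · exact absurd (mat_mul_pow_three hx hy hxy) (inv_inv (x * y) ▸ ht.inv.mat_pow_ne_neg_one 3)
    · exact absurd h (pow_one t ▸ ht.mat_pow_ne_neg_one 1)
    · exact absurd h (ht.mat_pow_ne_neg_one 2)
  · rintro (h | h)
    · exact isReflection_of_mem h
    · exact inv_inv t ▸ (isReflection_of_mem h).inv

theorem isCoxeterLike_mul (hx : x ∈ omegaReflections) (hy : y ∈ omegaReflections) (hxy : x ≠ y) :
    IsCoxeterLike omegaReflections (x * y) where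
  notMem_commutator h := by
    let detHom : G4 →* ℂˣ := GeneralLinearGroup.det.comp G4.subtype
    have det_eq_one : (mat (x * y)).det = 1 :=
      congrArg Units.val (Abelianization.commutator_subset_ker detHom h)
    rw [mat_mul, det_mul, det_mat_of_mem hx, det_mat_of_mem hy, ← sq] at det_eq_one
    exact isPrimitiveRoot_ω.pow_ne_one_of_pos_of_lt (by simp) (by simp) det_eq_one
  notMem_zpowers u hu := by
    rintro ⟨k, hk : u ^ k = x * y⟩
    have cube : (x * y) ^ 3 = 1 := by
      rw [← hk, ← zpow_natCast, zpow_comm, zpow_natCast,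
        isTetrahedral_omegaReflections.pow_three u hu, _root_.one_zpow]
    have hneg := mat_mul_pow_three hx hy hxy
    rw [cube, mat_one] at hneg
    norm_num [← ext_iff] at hneg

theorem IsCoxeter.six_dvd (hc : IsCoxeter c) {k : ℕ} (hk : c ^ k = 1) : 6 ∣ k := by
  obtain ⟨ζ, hζ, hdet⟩ := hc
  exact hζ.dvd_of_pow_eq_one k
    (pow_eq_of_pow_eq_smul_one hdet (by rw [← mat_pow, hk, mat_one, one_smul]))

theorem IsCoxeter.exists_mul_eq (hc : IsCoxeter c) :
    ∃ x ∈ omegaReflections, ∃ y ∈ omegaReflections, x ≠ y ∧ (c = x * y ∨ c = (x * y)⁻¹) := by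
  have pow_ne_one {k : ℕ} (hk : ¬ 6 ∣ k) : c ^ k ≠ 1 := mt hc.six_dvd hk
  have sq_eq_one {g : G4} (hg : mat g = -1) : g ^ 2 = 1 :=
    mat_injective (by rw [mat_pow, hg, neg_one_sq, mat_one])
  obtain (h | h) | h | h | h := mem_or_exists_mul_or_pow_eq_neg_one
    (pow_one c ▸ pow_ne_one (k := 1) (by simp))
  · exact absurd (isTetrahedral_omegaReflections.pow_three c h) (pow_ne_one (by simp))
  · exact absurd (isTetrahedral_omegaReflections.inv.pow_three c h) (pow_ne_one (by simp))
  · exact h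
  · exact absurd (sq_eq_one h) (pow_ne_one (by simp))
  · exact absurd (pow_mul c 2 2 ▸ sq_eq_one h) (pow_ne_one (by simp))

end ShephardTodd

theorem g4_orbit_count (m : ℕ) (hm : 2 ≤ m) (c : G4) (hc : IsCoxeter c) :
    {S : Set (Fin m → G4) | ∃ t : Fin m → G4,
      (∀ i, IsReflection (t i)) ∧ (List.ofFn t).prod = c ∧
      S = {s | SameHurwitzOrbit t s}}.ncard = (m + 2) / 3 := by
  simp only [isReflection_iff]
  obtain ⟨x, hx, y, hy, hxy, rfl | rfl⟩ := hc.exists_mul_eq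
  · exact isTetrahedral_omegaReflections.ncard_hurwitz_orbits hx hy (isCoxeterLike_mul hx hy hxy) hm
  · have hcox := (isCoxeterLike_mul hx hy hxy).inv_right.inv_left
    rw [_root_.mul_inv_rev] at hcox ⊢
    simpa only [inv_inv, Set.union_comm] using
      isTetrahedral_omegaReflections.inv.ncard_hurwitz_orbits
        (Set.inv_mem_inv.2 hy) (Set.inv_mem_inv.2 hx) hcox hm
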